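/- arXiv:2507.10828 — 5 statements merged into one kernel-verified Lean document; each statement's English description precedes it below -/
import Mathlib

section
/- Let n ≥ 2 and d ≥ 1 be integers. If S ⊆ [n]^∞ is a d-maximal set that contains no 1-ball, then S is finite and |S| ≤ d²·(n + 8·n^{2/3})^d. -/
/-- Hamming distance between infinite words over `Fin n`, as an extended natural number. -/
noncomputable def hDist (n : ℕ) (a b : ℕ → Fin n) : ℕ∞ := {i | a i ≠ b i}.encard

/-- The `r`-ball around `a`. -/
def hBall (n : ℕ) (a : ℕ → Fin n) (r : ℕ) : Set (ℕ → Fin n) := {x | hDist n x a ≤ (r : ℕ∞)}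

/-- `S` is `d`-maximal: it has diameter `d` and any point within distance `d`
of all of `S` already belongs to `S`. -/
def IsDMaximal (n d : ℕ) (S : Set (ℕ → Fin n)) : Prop :=
  (∀ a ∈ S, ∀ b ∈ S, hDist n a b ≤ (d : ℕ∞)) ∧
  (∃ a ∈ S, ∃ b ∈ S, hDist n a b = (d : ℕ∞)) ∧
  (∀ x : ℕ → Fin n, (∀ s ∈ S, hDist n x s ≤ (d : ℕ∞)) → x ∈ S)

/-- `S` contains an `r`-ball. -/
def ContainsBall (n : ℕ) (S : Set (ℕ → Fin n)) (r : ℕ) : Prop :=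
  ∃ a, hBall n a r ⊆ S

/-!
Fix `a, b ∈ S` at distance `d`, and let `D` be the set of coordinates where they differ. Comparing
`x ∈ S` with `b`, the number of coordinates outside `D` where `x` departs from `a` is at most the
number of coordinates in `D` where `x` agrees with `b`; the same holds with `a` and `b` exchanged.
So if each agreement with `a` or `b` on `D` is given weight `q`, and each departure from `a` outside
`D` weight `z = q⁻²`, then every word of `S` has weight at least `1`, and summing over the possible
restrictions to `D` gives at most `(n + 2q)^d` times the weighted number of words with a prescribed
restriction.

To bound the weighted number of words which agree on a set `E ⊇ D`, extend their common part by `a`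
and take an element `s` of `S` at distance at least `d` from the result. With `T` the set of
coordinates outside `E` where `s` departs from `a`, each of these words departs from `a` outside
`E ∪ T` at most as often as it agrees with `s` on `T`. Hence replacing `E` by `E ∪ T` at least
halves the number of departures, and giving weight `2` to agreements with `s` pays for halving `z`.
Since `|T| ≤ d / 2`, the step costs a factor `(1 + n z)^(d/2) ≤ exp (d n z / 2)`, and the product of
these over all steps is at most `exp (d n z)`. The choice `q = n^(2/3)` gives the bound.
-/

open Finset Real

variable {ι α : Type*} {d m : ℕ} {S : Set (ι → α)} {F : Finset (ι → α)} {a b c s x : ι → α}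

theorem finite_and_ncard_le_of_forall_card_le {β : Type*} {A : Set β} {B : ℝ}
    (h : ∀ G : Finset β, ↑G ⊆ A → (#G : ℝ) ≤ B) : A.Finite ∧ (A.ncard : ℝ) ≤ B := by
  have hfin : A.Finite := by
    by_contra hinf
    obtain ⟨N, hN⟩ := exists_nat_gt B
    obtain ⟨G, hGA, hGN⟩ := Set.Infinite.exists_subset_card_eq hinf N
    exact (hN.trans_le (hGN ▸ h G hGA)).false
  refine ⟨hfin, ?_⟩
  rw [Set.ncard_eq_toFinset_card A hfin]
  exact h _ hfin.coe_toFinset.subset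

theorem add_two_mul_rpow_mul_exp_le {t : ℝ} (ht : 1 ≤ t) :
    (t + 2 * t ^ (2 / 3 : ℝ)) * exp (t * ((t ^ (2 / 3 : ℝ)) ^ 2)⁻¹) ≤
      t + 8 * t ^ (2 / 3 : ℝ) := by
  obtain ⟨y, hy, rfl⟩ : ∃ y : ℝ, 1 ≤ y ∧ y ^ 3 = t :=
    ⟨t ^ (1 / 3 : ℝ), one_le_rpow ht (by norm_num), by
      rw [← rpow_natCast, ← rpow_mul (by positivity)]; norm_num⟩
  have hy0 : 0 < y := by positivity
  have hpow : (y ^ 3) ^ (2 / 3 : ℝ) = y ^ 2 := by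
    rw [← rpow_natCast, ← rpow_natCast, ← rpow_mul hy0.le]
    norm_num
  have harg : y ^ 3 * ((y ^ 2) ^ 2)⁻¹ = y⁻¹ := by field_simp
  have hexp : exp y⁻¹ ≤ 1 + y⁻¹ + y⁻¹ ^ 2 := by
    have habs : |y⁻¹| ≤ 1 := (abs_of_pos (inv_pos.2 hy0)).trans_le (inv_le_one_of_one_le₀ hy)
    linarith [(abs_le.1 (abs_exp_sub_one_sub_id_le habs)).2]
  rw [hpow, harg]
  calc (y ^ 3 + 2 * y ^ 2) * exp y⁻¹ ≤ (y ^ 3 + 2 * y ^ 2) * (1 + y⁻¹ + y⁻¹ ^ 2) := by gcongr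
    _ = y ^ 3 + 3 * y ^ 2 + 3 * y + 2 := by field_simp; ring
    _ ≤ y ^ 3 + 8 * y ^ 2 := by nlinarith

theorem sum_prod_apply_mul_le [Fintype α] [DecidableEq α] {T : Finset ι} {w : ι → α → ℝ}
    {g : (ι → α) → ℝ} {B : ℝ} (hw : ∀ i r, 0 ≤ w i r) (hB : 0 ≤ B)
    (hg : ∀ y ∈ F, ∑ x ∈ F with ∀ i ∈ T, x i = y i, g x ≤ B) :
    ∑ x ∈ F, (∏ i ∈ T, w i (x i)) * g x ≤ (∏ i ∈ T, ∑ r, w i r) * B := by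
  classical
  have hfiber (r : T → α) : ∑ x ∈ F with T.restrict x = r, g x ≤ B := by
    obtain hempty | ⟨y, hy⟩ := ({x ∈ F | T.restrict x = r} : Finset (ι → α)).eq_empty_or_nonempty
    · simpa only [hempty, sum_empty]
    · obtain ⟨hyF, rfl⟩ := mem_filter.1 hy
      simpa only [funext_iff, Subtype.forall, restrict_def] using hg y hyF
  calc ∑ x ∈ F, (∏ i ∈ T, w i (x i)) * g x
      = ∑ r : T → α, ∑ x ∈ F with T.restrict x = r, (∏ i ∈ T, w i (x i)) * g x :=
        (sum_fiberwise F _ _).symm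
    _ = ∑ r : T → α, (∏ i : T, w i (r i)) * ∑ x ∈ F with T.restrict x = r, g x := by
        refine sum_congr rfl fun r _ ↦ ?_
        rw [mul_sum]
        refine sum_congr rfl fun x hx ↦ ?_
        rw [← (mem_filter.1 hx).2, ← prod_coe_sort T]
        rfl
    _ ≤ ∑ r : T → α, (∏ i : T, w i (r i)) * B := by
        gcongr with r
        · exact prod_nonneg fun i _ ↦ hw i (r i)
        · exact hfiber r
    _ = (∏ i ∈ T, ∑ r, w i r) * B := by
        rw [← sum_mul, ← prod_coe_sort T, Fintype.prod_sum]

theorem sum_ite_mul_ite_of_ne [Fintype α] [DecidableEq α] {p q : α} (hpq : p ≠ q) (z : ℝ) :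
    ∑ r, (if r = p then 1 else z) * (if r = q then 2 else 1) = 1 + Fintype.card α * z := by
  have hterm (r : α) : (if r = p then 1 else z) * (if r = q then 2 else 1) =
      z + (if r = p then 1 - z else 0) + if r = q then z else 0 := by
    grind
  simp only [hterm, sum_add_distrib, sum_const, sum_ite_eq', mem_univ, if_true, card_univ,
    nsmul_eq_mul]
  ring

theorem prod_sum_ite_mul_ite_le_exp [Fintype α] [DecidableEq α] {T : Finset ι} {z : ℝ} (hz : 0 ≤ z)
    (hT : ∀ i ∈ T, a i ≠ s i) (hTm : #T ≤ m) :
    ∏ i ∈ T, ∑ r, (if r = a i then 1 else z) * (if r = s i then 2 else 1) ≤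
      exp (m * (Fintype.card α * z)) := by
  rw [prod_congr rfl fun i hi ↦ sum_ite_mul_ite_of_ne (hT i hi) z, prod_const, exp_nat_mul]
  calc (1 + Fintype.card α * z) ^ #T ≤ exp (Fintype.card α * z) ^ #T := by
        gcongr
        linarith [add_one_le_exp (Fintype.card α * z)]
    _ ≤ exp (Fintype.card α * z) ^ m := pow_le_pow_right₀ (one_le_exp (by positivity)) hTm

theorem sum_ite_or_le [Fintype α] [DecidableEq α] (p q : α) {w : ℝ} (hw : 0 ≤ w) :
    ∑ r, (if r = p ∨ r = q then w else 1) ≤ Fintype.card α + 2 * w := by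
  have hterm (r : α) : (if r = p ∨ r = q then w else 1) ≤
      1 + (if r = p then w else 0) + if r = q then w else 0 := by
    grind
  calc ∑ r, (if r = p ∨ r = q then w else 1)
      ≤ ∑ r, (1 + (if r = p then w else 0) + if r = q then w else 0) := sum_le_sum fun r _ ↦ hterm r
    _ = Fintype.card α + 2 * w := by
        simp only [sum_add_distrib, sum_const, sum_ite_eq', mem_univ, if_true, card_univ,
          nsmul_eq_mul]
        ring

theorem two_mul_ncard_sdiff_le_ncard [DecidableEq α] {X : Set ι} {T : Finset ι} (hX : X.Finite)
    (hTX : ∀ i ∈ T, x i = s i → i ∈ X) (hle : (X \ T).ncard ≤ #{i ∈ T | x i = s i}) :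
    2 * (X \ T).ncard ≤ X.ncard := by
  have hsub : ↑({i ∈ T | x i = s i} : Finset ι) ⊆ X ∩ T := fun i hi ↦
    have ⟨hiT, hxs⟩ := mem_filter.1 hi
    ⟨hTX i hiT hxs, hiT⟩
  have hW := Set.ncard_le_ncard hsub (hX.inter_of_left _)
  rw [Set.ncard_coe_finset] at hW
  have hadd := Set.ncard_inter_add_ncard_sdiff_eq_ncard X T hX
  omega

theorem pow_ncard_le_prod_mul [DecidableEq α] {X : Set ι} {T : Finset ι} {z : ℝ} (hz : 0 ≤ z)
    (hX : X.Finite) (hXT : ∀ i ∈ T, i ∈ X ↔ x i ≠ a i)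
    (hle : (X \ T).ncard ≤ #{i ∈ T | x i = s i}) :
    z ^ X.ncard ≤ (∏ i ∈ T, (if x i = a i then 1 else z) * (if x i = s i then 2 else 1)) *
      (z / 2) ^ (X \ T).ncard := by
  have hinter : X ∩ T = ({i ∈ T | x i ≠ a i} : Finset ι) := by
    ext i
    simp only [Set.mem_inter_iff, mem_coe, mem_filter]
    grind
  have hprod : ∏ i ∈ T, (if x i = a i then 1 else z) * (if x i = s i then 2 else 1) =
      z ^ (X ∩ T).ncard * 2 ^ #{i ∈ T | x i = s i} := by
    simp only [hinter, Set.ncard_coe_finset, prod_mul_distrib, prod_ite, prod_const, one_pow,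
      one_mul, mul_one, ne_eq]
  calc z ^ X.ncard = z ^ (X ∩ T).ncard * (2 ^ (X \ T).ncard * (z / 2) ^ (X \ T).ncard) := by
        rw [← mul_pow, mul_div_cancel₀ z two_ne_zero, ← pow_add,
          Set.ncard_inter_add_ncard_sdiff_eq_ncard X T hX]
    _ ≤ z ^ (X ∩ T).ncard * (2 ^ #{i ∈ T | x i = s i} * (z / 2) ^ (X \ T).ncard) := by
        gcongr
        exact one_le_two
    _ = _ := by rw [hprod, mul_assoc]

theorem sum_pow_ncard_le_exp_mul [Fintype α] [DecidableEq α] {X : (ι → α) → Set ι} {T : Finset ι}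
    {z B : ℝ} (hz : 0 ≤ z) (hB : 0 ≤ B) (hX : ∀ x ∈ F, (X x).Finite)
    (hXT : ∀ x ∈ F, ∀ i ∈ T, i ∈ X x ↔ x i ≠ a i) (hT : ∀ i ∈ T, a i ≠ s i) (hTm : #T ≤ m)
    (hle : ∀ x ∈ F, (X x \ T).ncard ≤ #{i ∈ T | x i = s i})
    (hfiber : ∀ y ∈ F, ∑ x ∈ F with ∀ i ∈ T, x i = y i, (z / 2) ^ (X x \ T).ncard ≤ B) :
    ∑ x ∈ F, z ^ (X x).ncard ≤ exp (m * (Fintype.card α * z)) * B := by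
  let w (i : ι) (r : α) : ℝ := (if r = a i then 1 else z) * (if r = s i then 2 else 1)
  have hw (i : ι) (r : α) : 0 ≤ w i r := by positivity
  calc ∑ x ∈ F, z ^ (X x).ncard
      ≤ ∑ x ∈ F, (∏ i ∈ T, w i (x i)) * (z / 2) ^ (X x \ T).ncard :=
        sum_le_sum fun x hx ↦ pow_ncard_le_prod_mul hz (hX x hx) (hXT x hx) (hle x hx)
    _ ≤ (∏ i ∈ T, ∑ r, w i r) * B := sum_prod_apply_mul_le hw hB hfiber
    _ ≤ exp (m * (Fintype.card α * z)) * B := by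
        gcongr
        exact prod_sum_ite_mul_ite_le_exp hz hT hTm

/-- The set of coordinates at which two words differ; its cardinality is their Hamming distance. -/
def neLocus (x y : ι → α) : Set ι := {i | x i ≠ y i}

/-- A set of words in which no two are at Hamming distance more than `d`, but which has an element
at distance at least `d` from every word of the whole space. A `d`-maximal set without `1`-balls has
both properties. Applying the second to an element of the set shows that the diameter is exactly
`d`, so this is not a separate field. -/
structure IsAntipodal (d : ℕ) (S : Set (ι → α)) : Prop where
  encard_neLocus_le : ∀ x ∈ S, ∀ y ∈ S, (neLocus x y).encard ≤ d
  exists_le_encard_neLocus : ∀ c, ∃ s ∈ S, d ≤ (neLocus c s).encard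

theorem neLocus_comm (x y : ι → α) : neLocus x y = neLocus y x :=
  Set.ext fun _ ↦ ne_comm

theorem neLocus_subset_union (x y z : ι → α) : neLocus x z ⊆ neLocus x y ∪ neLocus y z := by
  intro i hxz
  by_contra! h
  simp only [neLocus, Set.mem_union, Set.mem_ofPred_eq, not_or, not_not] at h hxz
  exact hxz (h.1.trans h.2)

theorem encard_neLocus_sdiff_le [DecidableEq α] {T : Finset ι}
    (hcs : d ≤ (neLocus c s).encard) (hxs : (neLocus x s).encard ≤ d)
    (hT : neLocus x c ∩ neLocus c s ⊆ T) :
    (neLocus x c \ T).encard ≤ #{i ∈ T | x i = s i} := by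
  set W : Finset ι := {i ∈ T | x i = s i} with hW
  -- A departure from `c` outside `T` increases the distance to `s`; only agreement with `s` inside
  -- `T` can compensate for it.
  have hdisj : Disjoint (neLocus c s) (neLocus x c \ T) :=
    Set.disjoint_left.2 fun i hi hi' ↦ hi'.2 (hT ⟨hi'.1, hi⟩)
  have hsub : neLocus c s ∪ neLocus x c \ T ⊆ neLocus x s ∪ W := by
    intro i hi
    by_cases hxs : x i = s i
    · have hiT : x i ≠ c i ∧ c i ≠ s i → i ∈ T := fun h ↦ hT h
      simp only [hW, neLocus, coe_filter, Set.mem_union, Set.mem_sdiff, Set.mem_ofPred_eq,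
        mem_coe] at hi ⊢
      grind
    · exact .inl hxs
  rw [← ENat.add_le_add_iff_left (ENat.natCast_ne_top d), ← Set.encard_coe_eq_coe_finsetCard]
  calc d + (neLocus x c \ T).encard
      ≤ (neLocus c s).encard + (neLocus x c \ T).encard := by gcongr
    _ = (neLocus c s ∪ neLocus x c \ T).encard := (Set.encard_union_eq hdisj).symm
    _ ≤ (neLocus x s ∪ W).encard := Set.encard_le_encard hsub
    _ ≤ (neLocus x s).encard + (W : Set ι).encard := Set.encard_union_le _ _
    _ ≤ d + (W : Set ι).encard := add_le_add hxs le_rfl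

theorem sum_pow_ncard_le_one {E : Set ι} {z : ℝ} (hE : ∀ x ∈ F, ∀ y ∈ F, Set.EqOn x y E)
    (hF : ∀ x ∈ F, neLocus x a ⊆ E) : ∑ x ∈ F, z ^ (neLocus x a \ E).ncard ≤ 1 := by
  have hcard : #F ≤ 1 := card_le_one.2 fun x hx y hy ↦ funext fun i ↦ by
    by_cases hi : i ∈ E
    · exact hE x hx y hy hi
    · have hxa : x i = a i := not_not.1 fun h ↦ hi (hF x hx h)
      have hya : y i = a i := not_not.1 fun h ↦ hi (hF y hy h)
      rw [hxa, hya]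
  calc ∑ x ∈ F, z ^ (neLocus x a \ E).ncard = ∑ x ∈ F, 1 :=
        sum_congr rfl fun x hx ↦ by
          rw [Set.sdiff_eq_empty.2 (hF x hx), Set.ncard_empty, pow_zero]
    _ ≤ 1 := by simpa using hcard

namespace IsAntipodal

theorem exists_encard_neLocus_eq [Nonempty α] (hS : IsAntipodal d S) :
    ∃ a ∈ S, ∃ b ∈ S, (neLocus a b).encard = d := by
  obtain ⟨a, ha, -⟩ := hS.exists_le_encard_neLocus (Classical.arbitrary _)
  obtain ⟨b, hb, hab⟩ := hS.exists_le_encard_neLocus a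
  exact ⟨a, ha, b, hb, (hS.encard_neLocus_le a ha b hb).antisymm hab⟩

theorem exists_ncard_sdiff_le [DecidableEq α] (hS : IsAntipodal d S) {E : Set ι} (y : ι → α)
    (hm : ∀ s ∈ S, (neLocus s a \ E).encard ≤ m) :
    ∃ (s : ι → α) (T : Finset ι), #T ≤ m ∧ (∀ i ∈ T, s i ≠ a i ∧ i ∉ E) ∧
      ∀ x ∈ S, Set.EqOn x y E → ((neLocus x a \ E) \ T).ncard ≤ #{i ∈ T | x i = s i} := by
  classical
  set c := E.piecewise y a with hc
  obtain ⟨s, hsS, hcs⟩ := hS.exists_le_encard_neLocus c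
  obtain ⟨T, hT⟩ := (Set.finite_of_encard_le_coe (hm s hsS)).exists_finset_coe
  have hTm : #T ≤ m := by
    simpa only [← hT, Set.encard_coe_eq_coe_finsetCard, Nat.cast_le] using hm s hsS
  refine ⟨s, T, hTm, fun i hi ↦ (Set.ext_iff.1 hT i).1 hi, fun x hxS hxy ↦ ?_⟩
  have hxc : neLocus x c = neLocus x a \ E := by
    ext i
    by_cases hi : i ∈ E
    · simp [neLocus, hc, hi, hxy hi]
    · simp [neLocus, hc, hi]
  have hsub : neLocus x c ∩ neLocus c s ⊆ T := by
    rw [hT, hxc]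
    rintro i ⟨⟨-, hi⟩, hcsi⟩
    simp only [neLocus, hc, Set.piecewise_eq_of_notMem _ _ _ hi, Set.mem_ofPred_eq] at hcsi
    exact ⟨hcsi.symm, hi⟩
  rw [← hxc]
  exact (Set.encard_le_coe_iff_finite_ncard_le.1
    (encard_neLocus_sdiff_le hcs (hS.encard_neLocus_le x hxS s hsS) hsub)).2

theorem sum_pow_ncard_le_of_ncard_le [Fintype α] (hS : IsAntipodal d S) {z : ℝ} (hz : 0 ≤ z)
    {E : Set ι} (k : ℕ) (hFS : ↑F ⊆ S) (hE : ∀ x ∈ F, ∀ y ∈ F, Set.EqOn x y E)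
    (hm : ∀ s ∈ S, (neLocus s a \ E).encard ≤ m)
    (hk : ∀ x ∈ F, (neLocus x a \ E).ncard ≤ k) :
    ∑ x ∈ F, z ^ (neLocus x a \ E).ncard ≤ exp (2 * m * Fintype.card α * z) := by
  classical
  have hfin (s) (hs : s ∈ S) : (neLocus s a \ E).Finite := Set.finite_of_encard_le_coe (hm s hs)
  induction k generalizing z E F with
  | zero =>
    refine (sum_pow_ncard_le_one hE fun x hx ↦ ?_).trans (one_le_exp (by positivity))
    rw [← Set.sdiff_eq_empty, ← Set.ncard_eq_zero (hfin x (hFS hx))]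
    exact Nat.le_zero.1 (hk x hx)
  | succ k ih =>
    obtain rfl | ⟨y, hy⟩ := F.eq_empty_or_nonempty
    · simpa only [sum_empty] using (exp_pos _).le
    obtain ⟨s, T, hTm, hT, hle⟩ := hS.exists_ncard_sdiff_le y hm
    have hdescent (x) (hx : x ∈ F) : ((neLocus x a \ E) \ T).ncard ≤ k := by
      have htwo := two_mul_ncard_sdiff_le_ncard (hfin x (hFS hx))
        (fun i hi hxs ↦ ⟨fun h ↦ (hT i hi).1 (hxs.symm.trans h), (hT i hi).2⟩)
        (hle x (hFS hx) (hE x hx y hy))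
      have := hk x hx
      omega
    have hfiber (y) (_ : y ∈ F) : ∑ x ∈ F with ∀ i ∈ T, x i = y i,
        (z / 2) ^ ((neLocus x a \ E) \ T).ncard ≤ exp (2 * m * Fintype.card α * (z / 2)) := by
      have hET (s) : neLocus s a \ (E ∪ T) ⊆ neLocus s a \ E :=
        Set.sdiff_subset_sdiff_right Set.subset_union_left
      simp only [Set.sdiff_sdiff] at hdescent ⊢
      refine ih (by positivity) ((coe_subset.2 (filter_subset _ _)).trans hFS) ?_
        (fun s hs ↦ (Set.encard_le_encard (hET s)).trans (hm s hs))
        (fun x hx ↦ hdescent x (mem_filter.1 hx).1) (fun s hs ↦ (hfin s hs).subset (hET s))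
      intro u hu v hv
      obtain ⟨⟨huF, huT⟩, hvF, hvT⟩ := And.intro (mem_filter.1 hu) (mem_filter.1 hv)
      exact (hE u huF v hvF).union fun i hi ↦ (huT i hi).trans (hvT i hi).symm
    calc ∑ x ∈ F, z ^ (neLocus x a \ E).ncard
        ≤ exp (m * (Fintype.card α * z)) * exp (2 * m * Fintype.card α * (z / 2)) :=
          sum_pow_ncard_le_exp_mul hz (exp_pos _).le (fun x hx ↦ hfin x (hFS hx))
            (fun x _ i hi ↦ and_iff_left (hT i hi).2) (fun i hi ↦ (hT i hi).1.symm) hTm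
            (fun x hx ↦ hle x (hFS hx) (hE x hx y hy)) hfiber
      _ = exp (2 * m * Fintype.card α * z) := by
          rw [← exp_add]
          ring_nf

theorem sum_pow_ncard_le [Fintype α] (hS : IsAntipodal d S) {z : ℝ} (hz : 0 ≤ z)
    {E : Set ι} (hFS : ↑F ⊆ S) (hE : ∀ x ∈ F, ∀ y ∈ F, Set.EqOn x y E)
    (hm : ∀ s ∈ S, (neLocus s a \ E).encard ≤ m) :
    ∑ x ∈ F, z ^ (neLocus x a \ E).ncard ≤ exp (2 * m * Fintype.card α * z) :=
  hS.sum_pow_ncard_le_of_ncard_le hz m hFS hE hm fun x hx ↦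
    (Set.encard_le_coe_iff_finite_ncard_le.1 (hm x (hFS hx))).2

theorem finite_and_two_mul_ncard_sdiff_le [DecidableEq α] (hS : IsAntipodal d S) (ha : a ∈ S)
    (hb : b ∈ S) (hab : (neLocus a b).encard = d) {D : Finset ι} (hD : D = neLocus a b)
    (hx : x ∈ S) :
    (neLocus x a \ D).Finite ∧
      2 * (neLocus x a \ D).ncard ≤ #{i ∈ D | x i = a i ∨ x i = b i} := by
  have hswap : neLocus x b \ D = neLocus x a \ D := by
    ext i
    simp only [hD, neLocus, Set.mem_sdiff, Set.mem_ofPred_eq]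
    grind
  have hb_le := encard_neLocus_sdiff_le (T := D) hab.ge (hS.encard_neLocus_le x hx b hb)
    (hD ▸ Set.inter_subset_right)
  have ha_le := encard_neLocus_sdiff_le (T := D) (neLocus_comm a b ▸ hab.ge)
    (hS.encard_neLocus_le x hx a ha) (hD ▸ neLocus_comm b a ▸ Set.inter_subset_right)
  rw [Set.encard_le_coe_iff_finite_ncard_le] at ha_le hb_le
  rw [hswap] at ha_le
  have hdisj : Disjoint {i ∈ D | x i = a i} {i ∈ D | x i = b i} := by
    refine disjoint_filter.2 fun i hi hxa hxb ↦ ?_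
    rw [← mem_coe, hD] at hi
    exact hi (hxa.symm.trans hxb)
  classical
  rw [filter_or, card_union_of_disjoint hdisj]
  exact ⟨ha_le.1, by omega⟩

theorem card_le [Fintype α] [Nonempty α] (hS : IsAntipodal d S) (hFS : ↑F ⊆ S) {q : ℝ}
    (hq : 1 ≤ q) :
    #F ≤ ((Fintype.card α + 2 * q) * exp (Fintype.card α * (q ^ 2)⁻¹)) ^ d := by
  classical
  obtain ⟨a, ha, b, hb, hab⟩ := hS.exists_encard_neLocus_eq
  obtain ⟨D, hD⟩ := (Set.finite_of_encard_eq_coe hab).exists_finset_coe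
  have hDcard : #D = d := by
    rwa [← hD, Set.encard_coe_eq_coe_finsetCard, Nat.cast_inj] at hab
  have htail (x) (hx : x ∈ S) := hS.finite_and_two_mul_ncard_sdiff_le ha hb hab hD hx
  have hm (s) (hs : s ∈ S) : (neLocus s a \ D).encard ≤ (d / 2 : ℕ) := by
    refine Set.encard_le_coe_iff_finite_ncard_le.2 ⟨(htail s hs).1, ?_⟩
    have := (htail s hs).2.trans (card_filter_le _ _)
    omega
  have hfiber (y) (_ : y ∈ F) : ∑ x ∈ F with ∀ i ∈ D, x i = y i,
      (q ^ 2)⁻¹ ^ (neLocus x a \ D).ncard ≤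
        exp (2 * (d / 2 : ℕ) * Fintype.card α * (q ^ 2)⁻¹) := by
    refine hS.sum_pow_ncard_le (by positivity) ((coe_subset.2 (filter_subset _ _)).trans hFS) ?_ hm
    intro u hu v hv i hi
    rw [(mem_filter.1 hu).2 i hi, (mem_filter.1 hv).2 i hi]
  have hone (x) (hx : x ∈ F) : 1 ≤ (∏ i ∈ D, if x i = a i ∨ x i = b i then q else 1) *
      (q ^ 2)⁻¹ ^ (neLocus x a \ D).ncard := by
    rw [prod_ite, prod_const_one, prod_const, mul_one, inv_pow, ← pow_mul, ← div_eq_mul_inv,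
      one_le_div (by positivity)]
    exact pow_le_pow_right₀ hq (htail x (hFS hx)).2
  calc (#F : ℝ) = ∑ x ∈ F, 1 := by rw [sum_const, nsmul_one]
    _ ≤ ∑ x ∈ F, (∏ i ∈ D, if x i = a i ∨ x i = b i then q else 1) *
          (q ^ 2)⁻¹ ^ (neLocus x a \ D).ncard := sum_le_sum hone
    _ ≤ (∏ i ∈ D, ∑ r, if r = a i ∨ r = b i then q else 1) *
          exp (2 * (d / 2 : ℕ) * Fintype.card α * (q ^ 2)⁻¹) :=
        sum_prod_apply_mul_le (w := fun i r ↦ if r = a i ∨ r = b i then q else 1)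
          (fun i r ↦ by positivity) (exp_pos _).le hfiber
    _ ≤ (∏ i ∈ D, (Fintype.card α + 2 * q)) * exp (d * (Fintype.card α * (q ^ 2)⁻¹)) := by
        gcongr ?_ * exp ?_
        · exact prod_le_prod (fun i _ ↦ sum_nonneg fun r _ ↦ by positivity)
            fun i _ ↦ sum_ite_or_le _ _ (by positivity)
        · rw [mul_assoc]
          gcongr
          exact_mod_cast Nat.mul_div_le d 2
    _ = ((Fintype.card α + 2 * q) * exp (Fintype.card α * (q ^ 2)⁻¹)) ^ d := by
        rw [prod_const, hDcard, exp_nat_mul, mul_pow]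

end IsAntipodal

theorem IsDMaximal.isAntipodal {n : ℕ} {S : Set (ℕ → Fin n)} (hmax : IsDMaximal n d S)
    (hball : ¬ ContainsBall n S 1) : IsAntipodal d S where
  encard_neLocus_le := hmax.1
  exists_le_encard_neLocus c := by
    by_contra! hlt
    refine hball ⟨c, fun x hx ↦ hmax.2.2 x fun s hs ↦ ?_⟩
    calc (neLocus x s).encard ≤ (neLocus x c ∪ neLocus c s).encard :=
          Set.encard_le_encard (neLocus_subset_union x c s)
      _ ≤ (neLocus x c).encard + (neLocus c s).encard := Set.encard_union_le _ _
      _ ≤ 1 + (neLocus c s).encard := add_le_add hx le_rfl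
      _ = (neLocus c s).encard + 1 := add_comm _ _
      _ ≤ d := Order.add_one_le_of_lt (hlt s hs)

theorem stmt0_general [Fintype α] [Nonempty α] (hS : IsAntipodal d S) :
    S.Finite ∧ (S.ncard : ℝ) ≤
      ((Fintype.card α : ℝ) + 8 * (Fintype.card α : ℝ) ^ ((2 : ℝ) / 3)) ^ d := by
  have hcard : (1 : ℝ) ≤ Fintype.card α := mod_cast Fintype.card_pos
  refine finite_and_ncard_le_of_forall_card_le fun F hFS ↦ ?_
  exact (hS.card_le hFS (one_le_rpow hcard (by norm_num))).trans
    (pow_le_pow_left₀ (by positivity) (add_two_mul_rpow_mul_exp_le hcard) d)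

theorem stmt0 (n d : ℕ) (hn : 2 ≤ n) (hd : 1 ≤ d) (S : Set (ℕ → Fin n))
    (hmax : IsDMaximal n d S) (hball : ¬ ContainsBall n S 1) :
    S.Finite ∧ (S.ncard : ℝ) ≤ (d : ℝ) ^ 2 * ((n : ℝ) + 8 * (n : ℝ) ^ ((2 : ℝ) / 3)) ^ d := by
  have : NeZero n := ⟨by omega⟩
  obtain ⟨hfin, hcard⟩ := Fintype.card_fin n ▸ stmt0_general (hmax.isAntipodal hball)
  exact ⟨hfin, hcard.trans
    (le_mul_of_one_le_left (by positivity) (one_le_pow₀ (mod_cast hd)))⟩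
end

section
/- For every integer d ≥ 1 there exists a finite d-maximal set S ⊆ [2]^∞ with |S| > binom(⌊3d/2⌋, d). -/
/-!
A word over two letters is the indicator of a set of coordinates, and the Hamming distance of two
words is the size of the symmetric difference of their sets; so one looks for large finite families
of finite sets that are maximal for their diameter.

For `d = 2k`, take the `k`-subsets of a `3k`-set `U`, which pairwise differ in at most `2k` places,
together with `U` itself, which differs from each of them in exactly `2k` places. A set `X` within
distance `2k` of the whole family must belong to it: compare `X` with `U` and with a `k`-subset of
`U` that avoids `X` as far as possible. This family beats the binomial coefficient by one.

For `d = 2k + 1`, adjoin one free coordinate to the previous family. This raises the diameter by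
one, preserves maximality, and doubles the size, while `binom(3k, k)` less than doubles on passing
to `binom(3k + 1, k)`.
-/

open Finset
open scoped symmDiff

lemma choose_succ_left_lt_two_mul_choose {n k : ℕ} (h : 2 * k ≤ n) :
    (n + 1).choose k < 2 * n.choose k := by
  have h_pos : 0 < (n + 1).choose k := Nat.choose_pos (by lia)
  refine lt_of_mul_lt_mul_right ?_ (n + 1).zero_le
  calc (n + 1).choose k * (n + 1)
      < (n + 1).choose k * (2 * (n + 1 - k)) := Nat.mul_lt_mul_of_pos_left (by lia) h_pos
    _ = 2 * n.choose k * (n + 1) := by rw [mul_assoc, Nat.choose_mul_succ_eq]; ring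

section Family

variable {α : Type*} [DecidableEq α]

lemma card_symmDiff_add_card (A B : Finset α) : #(A ∆ B) + #B = #A + 2 * #(B \ A) := by
  have h_symmDiff : #(A ∆ B) = #(A \ B) + #(B \ A) := card_union_of_disjoint disjoint_sdiff_sdiff
  have hA := card_sdiff_add_card_inter A B
  have hB := card_inter_add_card_sdiff B A
  rw [inter_comm] at hB
  lia

lemma card_symmDiff_le_card_erase_symmDiff_erase_add_one (m : α) (A B : Finset α) :
    #(A ∆ B) ≤ #(A.erase m ∆ B.erase m) + 1 :=
  calc #(A ∆ B) ≤ #(insert m (A.erase m ∆ B.erase m)) := card_le_card fun i hi ↦ by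
        simp only [mem_insert, mem_symmDiff, mem_erase] at hi ⊢
        tauto
    _ ≤ #(A.erase m ∆ B.erase m) + 1 := card_insert_le _ _

lemma exists_subset_card_eq_card_sdiff_eq_min {U : Finset α} {k : ℕ} (hk : k ≤ #U)
    (X : Finset α) : ∃ A ⊆ U, #A = k ∧ #(A \ X) = min k #(U \ X) := by
  rcases le_total k #(U \ X) with h | h
  · obtain ⟨A, hA, hAk⟩ := exists_subset_card_eq h
    have hAX : A \ X = A := sdiff_eq_self_of_disjoint (disjoint_of_subset_left hA sdiff_disjoint)
    exact ⟨A, hA.trans sdiff_subset, hAk, by rw [hAX, hAk, min_eq_left h]⟩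
  · obtain ⟨A, hUXA, hAU, hAk⟩ := exists_subsuperset_card_eq sdiff_subset h hk
    have hAX : A \ X = U \ X :=
      (sdiff_subset_sdiff hAU le_rfl).antisymm (subset_sdiff.2 ⟨hUXA, sdiff_disjoint⟩)
    exact ⟨A, hAU, hAk, by rw [hAX, min_eq_right h]⟩

/-- A family of finite sets is `d`-maximal if it has diameter `d` for the distance `#(A ∆ B)` and
contains every finite set within distance `d` of all its members. This is `IsDMaximal 2 d` for
finite sets of words, with words encoded by the set of coordinates carrying the second letter. -/
structure IsDMaximalFamily (d : ℕ) (𝒜 : Finset (Finset α)) : Prop where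
  card_symmDiff_le : ∀ A ∈ 𝒜, ∀ B ∈ 𝒜, #(A ∆ B) ≤ d
  exists_card_symmDiff_eq : ∃ A ∈ 𝒜, ∃ B ∈ 𝒜, #(A ∆ B) = d
  mem_of_forall_card_symmDiff_le : ∀ X, (∀ A ∈ 𝒜, #(X ∆ A) ≤ d) → X ∈ 𝒜

lemma eq_or_subset_and_card_eq_of_card_symmDiff_le {U X : Finset α} {k : ℕ} (hU : #U = 3 * k)
    (hXU : #(X ∆ U) ≤ 2 * k) (hX : ∀ A ⊆ U, #A = k → #(X ∆ A) ≤ 2 * k) :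
    X = U ∨ X ⊆ U ∧ #X = k := by
  obtain ⟨A, hAU, hAk, hAX⟩ := exists_subset_card_eq_card_sdiff_eq_min (hU ▸ by lia : k ≤ #U) X
  have hXA := hX A hAU hAk
  have hXA_card : #(X ∆ A) + k = #X + 2 * min k #(U \ X) := by
    rw [← hAX, ← card_symmDiff_add_card, hAk]
  rcases le_total k #(U \ X) with h_large | h_small
  · have hX_card_le : #X ≤ k := by lia
    have hUX_card := card_symmDiff_add_card U X
    rw [symmDiff_comm] at hUX_card
    have h_sdiff : #(X \ U) = 0 := by lia
    exact .inr ⟨sdiff_eq_empty_iff_subset.1 (card_eq_zero.1 h_sdiff), by lia⟩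
  · have hXU_card := card_symmDiff_add_card X U
    have h_symmDiff : #(X ∆ U) = 0 := by lia
    exact .inl (symmDiff_eq_empty.1 (card_eq_zero.1 h_symmDiff))

lemma isDMaximalFamily_insert_powersetCard {U : Finset α} {k : ℕ} (hU : #U = 3 * k) :
    IsDMaximalFamily (2 * k) (insert U (U.powersetCard k)) := by
  have h_dist_U : ∀ A ∈ U.powersetCard k, #(A ∆ U) = 2 * k := fun A hA ↦ by
    obtain ⟨hAU, hAk⟩ := mem_powersetCard.1 hA
    rw [symmDiff_of_le hAU, card_sdiff_of_subset hAU]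
    lia
  have h_dist : ∀ A ∈ U.powersetCard k, ∀ B ∈ U.powersetCard k, #(A ∆ B) ≤ 2 * k :=
    fun A hA B hB ↦ by
      have hAk := (mem_powersetCard.1 hA).2
      have hBk := (mem_powersetCard.1 hB).2
      have h_union := (card_le_card symmDiff_subset_union).trans (card_union_le A B)
      lia
  refine ⟨?_, ?_, fun X hX ↦ ?_⟩
  · simp only [mem_insert, forall_eq_or_imp]
    refine ⟨⟨by simp, fun B hB ↦ ?_⟩, fun A hA ↦ ⟨(h_dist_U A hA).le, h_dist A hA⟩⟩
    rw [symmDiff_comm, h_dist_U B hB]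
  · obtain ⟨A, hA⟩ := powersetCard_nonempty.2 (hU ▸ by lia : k ≤ #U)
    exact ⟨A, mem_insert_of_mem hA, U, mem_insert_self _ _, h_dist_U A hA⟩
  · rw [mem_insert, mem_powersetCard]
    exact eq_or_subset_and_card_eq_of_card_symmDiff_le hU (hX U (mem_insert_self _ _))
      fun A hAU hAk ↦ hX A (mem_insert_of_mem (mem_powersetCard.2 ⟨hAU, hAk⟩))

lemma card_insert_self_powersetCard {U : Finset α} {k : ℕ} (hk : k ≠ #U) :
    #(insert U (U.powersetCard k)) = (#U).choose k + 1 := by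
  rw [card_insert_of_notMem fun h ↦ hk (mem_powersetCard.1 h).2.symm, card_powersetCard]

/-- The product of a family with one free coordinate `m`, which members may contain or not;
meaningful when no member of `𝒜` contains `m`. -/
def adjoinCoord (m : α) (𝒜 : Finset (Finset α)) : Finset (Finset α) :=
  𝒜 ∪ 𝒜.image (insert m)

section AdjoinCoord

variable {m : α} {𝒜 : Finset (Finset α)}

lemma mem_adjoinCoord (hm : ∀ A ∈ 𝒜, m ∉ A) {X : Finset α} :
    X ∈ adjoinCoord m 𝒜 ↔ X.erase m ∈ 𝒜 := by
  rw [adjoinCoord, mem_union, mem_image]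
  constructor
  · rintro (hX | ⟨A, hA, rfl⟩)
    · rwa [erase_eq_of_notMem (hm X hX)]
    · rwa [erase_insert (hm A hA)]
  · intro hX
    by_cases hmX : m ∈ X
    · exact .inr ⟨X.erase m, hX, insert_erase hmX⟩
    · exact .inl (erase_eq_of_notMem hmX ▸ hX)

lemma card_adjoinCoord (hm : ∀ A ∈ 𝒜, m ∉ A) : #(adjoinCoord m 𝒜) = 2 * #𝒜 := by
  have h_inj : Set.InjOn (insert m) (𝒜 : Set (Finset α)) := insert_erase_invOn.2.injOn.mono hm
  have h_disj : Disjoint 𝒜 (𝒜.image (insert m)) := by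
    refine disjoint_left.2 fun A hA hA' ↦ hm A hA ?_
    obtain ⟨B, -, rfl⟩ := mem_image.1 hA'
    exact mem_insert_self m B
  rw [adjoinCoord, card_union_of_disjoint h_disj, card_image_of_injOn h_inj, two_mul]

lemma exists_mem_adjoinCoord_card_symmDiff_eq {A : Finset α} (hA : A ∈ 𝒜) (hmA : m ∉ A)
    (X : Finset α) : ∃ B ∈ adjoinCoord m 𝒜, #(X ∆ B) = #(X.erase m ∆ A) + 1 := by
  have hm : m ∉ X.erase m ∆ A := by simp [mem_symmDiff, hmA]
  simp only [← card_insert_of_notMem hm]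
  by_cases hmX : m ∈ X
  · refine ⟨A, mem_union_left _ hA, congrArg card ?_⟩
    grind [mem_symmDiff]
  · refine ⟨insert m A, mem_union_right _ (mem_image_of_mem _ hA), congrArg card ?_⟩
    grind [mem_symmDiff]

lemma IsDMaximalFamily.adjoinCoord {d : ℕ} (h : IsDMaximalFamily d 𝒜) (hm : ∀ A ∈ 𝒜, m ∉ A) :
    IsDMaximalFamily (d + 1) (adjoinCoord m 𝒜) := by
  refine ⟨fun A hA B hB ↦ ?_, ?_, fun X hX ↦ ?_⟩
  · rw [mem_adjoinCoord hm] at hA hB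
    exact (card_symmDiff_le_card_erase_symmDiff_erase_add_one m A B).trans
      (Nat.succ_le_succ (h.card_symmDiff_le _ hA _ hB))
  · obtain ⟨A, hA, B, hB, hAB⟩ := h.exists_card_symmDiff_eq
    obtain ⟨C, hC, hAC⟩ := exists_mem_adjoinCoord_card_symmDiff_eq hB (hm B hB) A
    rw [erase_eq_of_notMem (hm A hA), hAB] at hAC
    exact ⟨A, mem_union_left _ hA, C, hC, hAC⟩
  · refine (mem_adjoinCoord hm).2 (h.mem_of_forall_card_symmDiff_le _ fun A hA ↦ ?_)
    obtain ⟨B, hB, hXB⟩ := exists_mem_adjoinCoord_card_symmDiff_eq hA (hm A hA) X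
    exact Nat.succ_le_succ_iff.1 (hXB.symm.trans_le (hX B hB))

end AdjoinCoord

end Family

lemma exists_isDMaximalFamily_two_mul {k : ℕ} (hk : 1 ≤ k) :
    ∃ 𝒜 : Finset (Finset ℕ), IsDMaximalFamily (2 * k) 𝒜 ∧ (3 * k).choose k < #𝒜 := by
  have hU : #(range (3 * k)) = 3 * k := card_range _
  refine ⟨_, isDMaximalFamily_insert_powersetCard hU, ?_⟩
  rw [card_insert_self_powersetCard (by lia), hU]
  exact Nat.lt_succ_self _

lemma exists_isDMaximalFamily_two_mul_add_one (k : ℕ) :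
    ∃ 𝒜 : Finset (Finset ℕ), IsDMaximalFamily (2 * k + 1) 𝒜 ∧ (3 * k + 1).choose k < #𝒜 := by
  set U := range (3 * k)
  have hU : #U = 3 * k := card_range _
  have hm : ∀ A ∈ insert U (U.powersetCard k), 3 * k ∉ A := by
    have h_subset : ∀ A ∈ insert U (U.powersetCard k), A ⊆ U :=
      (forall_mem_insert _ _ _).2 ⟨Subset.rfl, fun A hA ↦ (mem_powersetCard.1 hA).1⟩
    exact fun A hA hmA ↦ notMem_range_self (h_subset A hA hmA)
  refine ⟨_, (isDMaximalFamily_insert_powersetCard hU).adjoinCoord hm, ?_⟩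
  calc (3 * k + 1).choose k
      < 2 * (3 * k).choose k := choose_succ_left_lt_two_mul_choose (by lia)
    _ = 2 * #(U.powersetCard k) := by rw [card_powersetCard, hU]
    _ ≤ 2 * #(insert U (U.powersetCard k)) := by gcongr; exact subset_insert _ _
    _ = #(adjoinCoord (3 * k) (insert U (U.powersetCard k))) := (card_adjoinCoord hm).symm

lemma hDist_indicator_one (A B : Set ℕ) :
    hDist 2 (A.indicator 1) (B.indicator 1) = (A ∆ B).encard := by
  refine congrArg Set.encard (Set.ext fun i ↦ ?_)
  by_cases hA : i ∈ A <;> by_cases hB : i ∈ B <;> simp [Set.mem_symmDiff, hA, hB]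

lemma exists_indicator_one_eq (x : ℕ → Fin 2) : ∃ A : Set ℕ, A.indicator 1 = x := by
  refine ⟨{i | x i = 1}, funext fun i ↦ ?_⟩
  by_cases h : x i = 0
  · simp [h]
  · simp [Fin.eq_one_of_ne_zero _ h]

/-- The word whose coordinates in `A` are `1 : Fin 2` and whose other coordinates are `0`. -/
noncomputable def wordOfFinset (A : Finset ℕ) : ℕ → Fin 2 := (A : Set ℕ).indicator 1

lemma hDist_wordOfFinset (A B : Finset ℕ) :
    hDist 2 (wordOfFinset A) (wordOfFinset B) = #(A ∆ B) := by
  rw [wordOfFinset, wordOfFinset, hDist_indicator_one, ← coe_symmDiff,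
    Set.encard_coe_eq_coe_finsetCard]

lemma wordOfFinset_injective : Function.Injective wordOfFinset := fun A B h ↦ by
  have h_dist := hDist_wordOfFinset A B
  simpa [hDist, h, eq_comm] using h_dist

lemma exists_wordOfFinset_eq_of_hDist_ne_top {x : ℕ → Fin 2} {A : Finset ℕ}
    (h : hDist 2 x (wordOfFinset A) ≠ ⊤) : ∃ X, wordOfFinset X = x := by
  obtain ⟨X, rfl⟩ := exists_indicator_one_eq x
  rw [wordOfFinset, hDist_indicator_one, Set.encard_ne_top_iff] at h
  have hX : X.Finite := by
    rw [← symmDiff_bot X, h.symmDiff_congr, symmDiff_bot]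
    exact A.finite_toSet
  exact ⟨hX.toFinset, by rw [wordOfFinset, hX.coe_toFinset]⟩

lemma IsDMaximalFamily.isDMaximal_image_wordOfFinset {d : ℕ} {𝒜 : Finset (Finset ℕ)}
    (h : IsDMaximalFamily d 𝒜) : IsDMaximal 2 d (wordOfFinset '' 𝒜) := by
  simp only [IsDMaximal, Set.forall_mem_image, Set.exists_mem_image, mem_coe, hDist_wordOfFinset,
    Nat.cast_le, Nat.cast_inj]
  refine ⟨h.card_symmDiff_le, h.exists_card_symmDiff_eq, fun x hx ↦ ?_⟩
  obtain ⟨A, hA, -⟩ := h.exists_card_symmDiff_eq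
  obtain ⟨X, rfl⟩ :=
    exists_wordOfFinset_eq_of_hDist_ne_top (ne_top_of_le_ne_top (ENat.natCast_ne_top d) (hx hA))
  simp only [hDist_wordOfFinset, Nat.cast_le] at hx
  exact Set.mem_image_of_mem _ (h.mem_of_forall_card_symmDiff_le X hx)

theorem stmt1 (d : ℕ) (hd : 1 ≤ d) :
    ∃ S : Set (ℕ → Fin 2), S.Finite ∧ IsDMaximal 2 d S ∧ (3 * d / 2).choose d < S.ncard := by
  suffices h : ∃ 𝒜 : Finset (Finset ℕ), IsDMaximalFamily d 𝒜 ∧ (3 * d / 2).choose d < #𝒜 by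
    obtain ⟨𝒜, h_max, h_card⟩ := h
    refine ⟨wordOfFinset '' 𝒜, 𝒜.finite_toSet.image _, h_max.isDMaximal_image_wordOfFinset, ?_⟩
    rwa [Set.ncard_image_of_injective _ wordOfFinset_injective, Set.ncard_coe_finset]
  obtain ⟨k, rfl | rfl⟩ := d.even_or_odd'
  · rw [show 3 * (2 * k) / 2 = 3 * k by lia,
      Nat.choose_symm_of_eq_add (show 3 * k = 2 * k + k by lia)]
    exact exists_isDMaximalFamily_two_mul (by lia)
  · rw [show 3 * (2 * k + 1) / 2 = 3 * k + 1 by lia,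
      Nat.choose_symm_of_eq_add (show 3 * k + 1 = 2 * k + 1 + k by lia)]
    exact exists_isDMaximalFamily_two_mul_add_one k
end

section
/- There exists d₀ such that for every integer d ≥ d₀, every d-maximal set S ⊆ [2]^∞ that contains no 1-ball satisfies |S| ≤ (4 − 10^{−10})^d. -/
/-!
Fix a word of `S` and record every other word of `S` by the finite set of coordinates where the two
differ. Distances become cardinalities of symmetric differences, and we get a family `𝓕 ∋ ∅` of
finite sets, pairwise at distance at most `d`, such that every finite set is at distance at least
`d` from some member of `𝓕`.

* Given `Q`, pick `B ∈ 𝓕` at distance at least `d` from `Q`. Every `A ∈ 𝓕` containing `Q` is within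
  `d` of `B`, so at least half of `A \ Q` lies in `B \ Q`. Guessing the elements of `A \ Q` inside
  such sets one at a time, at most `choose (2 * d - #Q) t` members of `𝓕` are obtained from `Q` by
  adding `t` elements, hence at most `2 ^ (2 * d - #Q)` members of `𝓕` contain `Q`.
* Consequently, for `C ∈ 𝓕` and `G` of size at least `d / 50`, the members of `𝓕` differing from `C`
  on at least three fifths of `G` are exponentially fewer than `4 ^ d`: translate `C` to `∅` and
  count the pairs of such a member `A` and a `k`-subset `Q` of `A ∩ G`.
* If a set `U` of size at most `5 * d / 2` almost contains all the members considered, then their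
  traces on `U` are few by a Kleitman-type bound, and each trace comes from few members.
* Otherwise some `C ∈ 𝓕` has more than `d / 50` elements outside `U`. Discard the members of `𝓕`
  missing at least three fifths of `C \ U`, and replace `U` by `U ∪ C`. All remaining members
  contain at least two fifths of `U` and have at most `d` elements, so `#U ≤ 5 * d / 2` throughout
  and the process stops after a bounded number of rounds.
-/

open Finset
open scoped symmDiff

section SetFamilies

variable {α : Type*} [DecidableEq α] {a : α} {A B G U : Finset α} {𝒜 ℬ T : Finset (Finset α)}
  {D : ℕ}

lemma card_symmDiff_add_two_mul_card_inter (A B : Finset α) :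
    #(A ∆ B) + 2 * #(A ∩ B) = #A + #B := by
  have hAB : #(A ∆ B) = #(A \ B) + #(B \ A) := by
    rw [symmDiff_def, sup_eq_union, card_union_of_disjoint disjoint_sdiff_sdiff]
  have hA := card_sdiff_add_card_inter A B
  have hB := card_sdiff_add_card_inter B A
  rw [inter_comm B A] at hB
  lia

lemma card_symmDiff_insert_of_notMem (hA : a ∉ A) (hB : a ∉ B) :
    #(A ∆ insert a B) = #(A ∆ B) + 1 := by
  have h : A ∆ insert a B = insert a (A ∆ B) := by
    ext i
    simp only [mem_symmDiff, mem_insert]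
    grind
  rw [h, card_insert_of_notMem (by simp [mem_symmDiff, hA, hB])]

lemma insert_symmDiff_insert_of_notMem (hA : a ∉ A) (hB : a ∉ B) :
    insert a A ∆ insert a B = A ∆ B := by
  ext i
  simp only [mem_symmDiff, mem_insert]
  grind

lemma nonMemberSubfamily_subset_powerset (h : 𝒜 ⊆ (insert a U).powerset) :
    𝒜.nonMemberSubfamily a ⊆ U.powerset := by
  intro A hA
  rw [mem_nonMemberSubfamily] at hA
  exact mem_powerset.2 ((subset_insert_iff_of_notMem hA.2).1 (mem_powerset.1 (h hA.1)))

lemma memberSubfamily_subset_powerset (h : 𝒜 ⊆ (insert a U).powerset) :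
    𝒜.memberSubfamily a ⊆ U.powerset := by
  intro A hA
  rw [mem_memberSubfamily] at hA
  exact mem_powerset.2 ((insert_subset_insert_iff hA.2).1 (mem_powerset.1 (h hA.1)))

lemma add_mul_add_le_one_add_sq_mul {x₀ x₁ y₀ y₁ t c : ℝ} (hc : 0 ≤ c)
    (hx₀ : 0 ≤ x₀) (hx₁ : 0 ≤ x₁) (hy₀ : 0 ≤ y₀) (hy₁ : 0 ≤ y₁)
    (h₀₀ : x₀ * y₀ ≤ c) (h₁₁ : x₁ * y₁ ≤ c) (h₀₁ : x₀ * y₁ ≤ t * c) (h₁₀ : x₁ * y₀ ≤ t * c) :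
    (x₀ + x₁) * (y₀ + y₁) ≤ (1 + t) ^ 2 * c := by
  suffices hdiag : x₀ * y₀ + x₁ * y₁ ≤ (1 + t ^ 2) * c by linear_combination hdiag + h₀₁ + h₁₀
  rcases hc.eq_or_lt with rfl | hc
  · linarith
  have hprod : (x₀ * y₀) * (x₁ * y₁) ≤ (t * c) * (t * c) :=
    calc (x₀ * y₀) * (x₁ * y₁) = (x₀ * y₁) * (x₁ * y₀) := by ring
      _ ≤ (t * c) * (t * c) := by
        gcongr
        exact (mul_nonneg hx₀ hy₁).trans h₀₁
  have hgap : 0 ≤ (c - x₀ * y₀) * (c - x₁ * y₁) := mul_nonneg (by linarith) (by linarith)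
  refine le_of_mul_le_mul_left ?_ hc
  linear_combination hprod + hgap

lemma card_nonMemberSubfamily_mul_card_memberSubfamily_le {t c : ℝ} (ht : 0 < t) (hc : 0 ≤ c)
    (h : ∀ A ∈ 𝒜, ∀ B ∈ ℬ, #(A ∆ B) ≤ D)
    (hc' : ∀ E, (∀ A ∈ 𝒜.nonMemberSubfamily a, ∀ B ∈ ℬ.memberSubfamily a, #(A ∆ B) ≤ E) →
      (#(𝒜.nonMemberSubfamily a) * #(ℬ.memberSubfamily a) : ℝ) ≤ c / t ^ E) :
    (#(𝒜.nonMemberSubfamily a) * #(ℬ.memberSubfamily a) : ℝ) ≤ t * (c / t ^ D) := by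
  have hlt : ∀ A ∈ 𝒜.nonMemberSubfamily a, ∀ B ∈ ℬ.memberSubfamily a, #(A ∆ B) + 1 ≤ D := by
    intro A hA B hB
    rw [mem_nonMemberSubfamily] at hA
    rw [mem_memberSubfamily] at hB
    exact (card_symmDiff_insert_of_notMem hA.2 hB.2).symm.trans_le (h A hA.1 _ hB.1)
  rcases (𝒜.nonMemberSubfamily a).eq_empty_or_nonempty with h₀ | ⟨A, hA⟩
  · rw [h₀, card_empty, Nat.cast_zero, zero_mul]
    positivity
  rcases (ℬ.memberSubfamily a).eq_empty_or_nonempty with h₁ | ⟨B, hB⟩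
  · rw [h₁, card_empty, Nat.cast_zero, mul_zero]
    positivity
  obtain ⟨E, rfl⟩ : ∃ E, D = E + 1 :=
    ⟨D - 1, by have := hlt A hA B hB; lia⟩
  refine (hc' E fun A hA B hB => Nat.le_of_succ_le_succ (hlt A hA B hB)).trans_eq ?_
  rw [pow_succ', ← mul_div_assoc, mul_div_mul_left _ _ ht.ne']

/-- For `ℬ = 𝒜` this is an exponential form of Kleitman's diameter theorem. -/
theorem card_mul_card_le_of_card_symmDiff_le {t : ℝ} (ht₀ : 0 < t) (ht₁ : t ≤ 1)
    (h𝒜 : 𝒜 ⊆ U.powerset) (hℬ : ℬ ⊆ U.powerset) (h : ∀ A ∈ 𝒜, ∀ B ∈ ℬ, #(A ∆ B) ≤ D) :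
    (#𝒜 * #ℬ : ℝ) ≤ (1 + t) ^ (2 * #U) / t ^ D := by
  induction U using Finset.induction_on generalizing D 𝒜 ℬ with
  | empty =>
    have hcard : #𝒜 * #ℬ ≤ 1 :=
      mul_le_one' (by simpa using card_le_card h𝒜) (by simpa using card_le_card hℬ)
    calc (#𝒜 * #ℬ : ℝ) ≤ 1 := by exact_mod_cast hcard
      _ ≤ 1 / t ^ D := one_le_one_div (by positivity) (pow_le_one₀ ht₀.le ht₁)
      _ = _ := by simp
  | insert a U ha ih =>
    have h𝒜₀ := nonMemberSubfamily_subset_powerset h𝒜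
    have h𝒜₁ := memberSubfamily_subset_powerset h𝒜
    have hℬ₀ := nonMemberSubfamily_subset_powerset hℬ
    have hℬ₁ := memberSubfamily_subset_powerset hℬ
    have h₀₀ := ih h𝒜₀ hℬ₀ fun A hA B hB =>
      h A (mem_nonMemberSubfamily.1 hA).1 B (mem_nonMemberSubfamily.1 hB).1
    have h₁₁ := ih h𝒜₁ hℬ₁ fun A hA B hB => by
      rw [mem_memberSubfamily] at hA hB
      exact (insert_symmDiff_insert_of_notMem hA.2 hB.2) ▸ h _ hA.1 _ hB.1
    have hc : 0 ≤ (1 + t) ^ (2 * #U) := by positivity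
    have h₀₁ := card_nonMemberSubfamily_mul_card_memberSubfamily_le ht₀ hc h fun _ => ih h𝒜₀ hℬ₁
    have h₁₀ := card_nonMemberSubfamily_mul_card_memberSubfamily_le ht₀ hc
      (fun B hB A hA => symmDiff_comm A B ▸ h A hA B hB) fun _ => ih hℬ₀ h𝒜₁
    rw [mul_comm] at h₁₀
    rw [← card_memberSubfamily_add_card_nonMemberSubfamily a 𝒜,
      ← card_memberSubfamily_add_card_nonMemberSubfamily a ℬ, card_insert_of_notMem ha,
      mul_add_one, add_comm (2 * _) 2, pow_add, mul_div_assoc]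
    push_cast
    exact add_mul_add_le_one_add_sq_mul (by positivity) (by positivity) (by positivity)
      (by positivity) (by positivity) h₁₁ h₀₀ h₁₀ h₀₁

lemma card_image_inter_le_of_card_symmDiff_le {s : ℝ} (hs₀ : 0 < s) (hs₁ : s ≤ 1) (U : Finset α)
    (hT : ∀ A ∈ T, ∀ B ∈ T, #(A ∆ B) ≤ D) :
    (#(T.image (· ∩ U)) : ℝ) ≤ (1 + s ^ 2) ^ #U / s ^ D := by
  have hU : T.image (· ∩ U) ⊆ U.powerset := by
    simp only [image_subset_iff, mem_powerset]
    exact fun A _ => inter_subset_right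
  have hdiam : ∀ P ∈ T.image (· ∩ U), ∀ Q ∈ T.image (· ∩ U), #(P ∆ Q) ≤ D := by
    simp only [forall_mem_image]
    intro A hA B hB
    refine (card_le_card ?_).trans (hT A hA B hB)
    rw [← inf_eq_inter, ← inf_eq_inter, ← inf_symmDiff_distrib_right]
    exact inter_subset_left
  refine le_of_sq_le_sq ?_ (by positivity)
  calc (#(T.image (· ∩ U)) : ℝ) ^ 2 ≤ (1 + s ^ 2) ^ (2 * #U) / (s ^ 2) ^ D := by
        rw [sq]
        exact card_mul_card_le_of_card_symmDiff_le (by positivity) (pow_le_one₀ hs₀.le hs₁)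
          hU hU hdiam
    _ = ((1 + s ^ 2) ^ #U / s ^ D) ^ 2 := by
        rw [div_pow, ← pow_mul, ← pow_mul, ← pow_mul, mul_comm 2, mul_comm 2]

lemma two_mul_card_union_le (hUG : Disjoint U G) (hU : 2 * #U ≤ 5 * #(A ∩ U))
    (hG : 5 * #(G \ A) < 3 * #G) : 2 * #(U ∪ G) ≤ 5 * #(A ∩ (U ∪ G)) := by
  have hsplit : #(A ∩ (U ∪ G)) = #(A ∩ U) + #(A ∩ G) := by
    rw [inter_union_distrib_left,
      card_union_of_disjoint (hUG.mono inter_subset_right inter_subset_right)]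
  have hsplitG := card_sdiff_add_card_inter G A
  rw [inter_comm] at hsplitG
  rw [hsplit, card_union_of_disjoint hUG]
  lia

end SetFamilies

section Estimates

lemma sum_range_choose_le_one_add_pow_div {t : ℝ} (ht₀ : 0 < t) (ht₁ : t ≤ 1) (n m : ℕ) :
    (∑ i ∈ range (m + 1), n.choose i : ℝ) ≤ (1 + t) ^ n / t ^ m := by
  rw [le_div_iff₀ (by positivity), sum_mul]
  calc ∑ i ∈ range (m + 1), (n.choose i : ℝ) * t ^ m
      ≤ ∑ i ∈ range (m + 1), (n.choose i : ℝ) * t ^ i := by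
        refine sum_le_sum fun i hi => mul_le_mul_of_nonneg_left ?_ (by positivity)
        exact pow_le_pow_of_le_one ht₀.le ht₁ (Nat.lt_succ_iff.1 (mem_range.1 hi))
    _ ≤ ∑ i ∈ range (n + m + 1), (n.choose i : ℝ) * t ^ i :=
        sum_le_sum_of_subset_of_nonneg (range_subset_range.2 (by lia)) fun _ _ _ => by positivity
    _ = ∑ i ∈ range (n + 1), (n.choose i : ℝ) * t ^ i := by
        refine (sum_subset (range_subset_range.2 (by lia)) fun i _ hi => ?_).symm
        rw [Nat.choose_eq_zero_of_lt (by simpa using hi), Nat.cast_zero, zero_mul]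
    _ = (1 + t) ^ n := by
        rw [add_comm 1 t, add_pow]
        simp only [one_pow, mul_one, mul_comm]

lemma le_choose_succ_succ_of_mul_le {N n t e : ℕ} (htn : t ≤ n)
    (h : N * (t + 1 + e) ≤ (n + 1 + e) * n.choose t) : N ≤ (n + 1).choose (t + 1) := by
  have he : (n + 1 + e) * (t + 1) ≤ (n + 1) * (t + 1 + e) := by
    linear_combination Nat.mul_le_mul_left e htn
  refine Nat.le_of_mul_le_mul_right (c := (t + 1) * (t + 1 + e)) ?_ (by positivity)
  calc N * ((t + 1) * (t + 1 + e)) = N * (t + 1 + e) * (t + 1) := by ring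
    _ ≤ (n + 1 + e) * n.choose t * (t + 1) := Nat.mul_le_mul_right _ h
    _ = (n + 1 + e) * (t + 1) * n.choose t := by ring
    _ ≤ (n + 1) * (t + 1 + e) * n.choose t := Nat.mul_le_mul_right _ he
    _ = (n + 1) * n.choose t * (t + 1 + e) := by ring
    _ = (n + 1).choose (t + 1) * ((t + 1) * (t + 1 + e)) := by
      rw [Nat.add_one_mul_choose_eq, mul_assoc]

lemma pow_div_le_pow {x y : ℝ} {m : ℕ} (hx : 0 ≤ x) (hy : 1 ≤ y) (hxy : x ≤ y ^ m) (d : ℕ) :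
    x ^ (d / m) ≤ y ^ d :=
  calc x ^ (d / m) ≤ (y ^ m) ^ (d / m) := by gcongr
    _ = y ^ (m * (d / m)) := (pow_mul _ _ _).symm
    _ ≤ y ^ d := pow_le_pow_right₀ hy (Nat.mul_div_le d m)

lemma mul_pow_div_le_pow {x y : ℝ} {m : ℕ} (hm : m ≠ 0) (hx : 0 ≤ x) (hy₀ : 0 ≤ y) (hy₁ : y ≤ 1)
    (hxy : x ≤ y ^ m) (d : ℕ) : x * x ^ (d / m) ≤ y ^ d :=
  calc x * x ^ (d / m) = x ^ (d / m + 1) := (pow_succ' _ _).symm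
    _ ≤ (y ^ m) ^ (d / m + 1) := by gcongr
    _ = y ^ (m * (d / m + 1)) := (pow_mul _ _ _).symm
    _ ≤ y ^ d := pow_le_pow_of_le_one hy₀ hy₁ (Nat.lt_mul_div_succ d (Nat.pos_of_ne_zero hm)).le

lemma five_fourths_pow_le {u d : ℕ} (h : 2 * u ≤ 5 * d) : (5 / 4 : ℝ) ^ u ≤ (7 / 4) ^ d := by
  refine le_of_sq_le_sq ?_ (by positivity)
  calc ((5 / 4 : ℝ) ^ u) ^ 2 = (5 / 4) ^ (2 * u) := by rw [← pow_mul, mul_comm]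
    _ ≤ (5 / 4) ^ (5 * d) := pow_le_pow_right₀ (by norm_num) h
    _ = ((5 / 4) ^ 5) ^ d := pow_mul _ _ _
    _ ≤ ((7 / 4) ^ 2) ^ d := by gcongr; norm_num
    _ = ((7 / 4) ^ d) ^ 2 := by rw [← pow_mul, ← pow_mul, mul_comm]

lemma eventually_const_mul_add_le_pow :
    ∀ᶠ d : ℕ in Filter.atTop,
      126 * (4 ^ d * (10 / 11) ^ (d / 1000)) + (395 / 100) ^ d ≤ (4 - 1 / 10 ^ 10 : ℝ) ^ d := by
  have hsmall : ∀ᶠ d : ℕ in Filter.atTop,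
      ‖(4 * (1 - 1 / 20000) : ℝ) ^ d‖ ≤ 1 / 200 * ‖(4 - 1 / 10 ^ 10 : ℝ) ^ d‖ :=
    (isLittleO_pow_pow_of_lt_left (by norm_num) (by norm_num)).def (by norm_num)
  filter_upwards [hsmall] with d hd
  rw [Real.norm_of_nonneg (by positivity), Real.norm_of_nonneg (by norm_num)] at hd
  have hfloor : (10 / 11 : ℝ) * (10 / 11) ^ (d / 1000) ≤ (1 - 1 / 20000) ^ d := by
    refine mul_pow_div_le_pow (by norm_num) (by norm_num) (by norm_num) (by norm_num) ?_ d
    calc (10 / 11 : ℝ) ≤ 1 + (1000 : ℕ) * (-1 / 20000) := by norm_num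
      _ ≤ (1 + -1 / 20000) ^ 1000 := one_add_mul_le_pow (by norm_num) 1000
      _ = (1 - 1 / 20000) ^ 1000 := by congr 1; norm_num
  have hfirst : 10 / 11 * (4 ^ d * (10 / 11) ^ (d / 1000)) ≤ (4 * (1 - 1 / 20000) : ℝ) ^ d := by
    rw [mul_pow, mul_left_comm]
    gcongr
  have hsecond : (395 / 100 : ℝ) ^ d ≤ (4 * (1 - 1 / 20000)) ^ d := by
    gcongr
    norm_num
  linarith [pow_nonneg (show (0 : ℝ) ≤ 4 * (1 - 1 / 20000) by norm_num) d]

lemma finite_and_ncard_le_of_forall_finset_card_le {β : Type*} {s : Set β} {c : ℝ}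
    (h : ∀ T : Finset β, (∀ x ∈ T, x ∈ s) → (#T : ℝ) ≤ c) : s.Finite ∧ (s.ncard : ℝ) ≤ c := by
  have hfin : s.Finite := by
    by_contra hinf
    obtain ⟨N, hN⟩ := exists_nat_gt c
    obtain ⟨T, hTs, rfl⟩ := Set.Infinite.exists_subset_card_eq hinf N
    exact (h T fun x hx => hTs hx).not_gt hN
  refine ⟨hfin, ?_⟩
  rw [Set.ncard_eq_toFinset_card s hfin]
  exact h _ fun x hx => hfin.mem_toFinset.1 hx

end Estimates

/-- A family of finite sets whose diameter and circumradius with respect to the distance `#(A ∆ B)`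
are both `d`: its members are pairwise at distance at most `d`, and no ball of radius less than `d`
around a finite set, whether or not in the family, covers it. -/
structure IsDiametral {α : Type*} [DecidableEq α] (d : ℕ) (𝓕 : Set (Finset α)) : Prop where
  card_symmDiff_le : ∀ A ∈ 𝓕, ∀ B ∈ 𝓕, #(A ∆ B) ≤ d
  exists_le_card_symmDiff : ∀ X : Finset α, ∃ B ∈ 𝓕, d ≤ #(X ∆ B)

namespace IsDiametral

variable {α : Type*} [DecidableEq α] {d k m n t : ℕ} {𝓕 : Set (Finset α)} {A C G Q U : Finset α}
  {T : Finset (Finset α)}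

lemma translate (h𝓕 : IsDiametral d 𝓕) (C : Finset α) : IsDiametral d {A | A ∆ C ∈ 𝓕} where
  card_symmDiff_le A hA B hB := by
    have h := h𝓕.card_symmDiff_le _ hA _ hB
    rwa [symmDiff_symmDiff_symmDiff_comm, symmDiff_self, symmDiff_bot] at h
  exists_le_card_symmDiff X := by
    obtain ⟨B, hB, h⟩ := h𝓕.exists_le_card_symmDiff (X ∆ C)
    refine ⟨B ∆ C, by simpa [symmDiff_assoc] using hB, ?_⟩
    rwa [symmDiff_assoc, symmDiff_comm C B] at h

lemma card_le (h𝓕 : IsDiametral d 𝓕) (h₀ : ∅ ∈ 𝓕) (hA : A ∈ 𝓕) : #A ≤ d := by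
  simpa [← bot_eq_empty] using h𝓕.card_symmDiff_le A hA ∅ h₀

lemma exists_disjoint_forall_card_add_le (h𝓕 : IsDiametral d 𝓕) (h₀ : ∅ ∈ 𝓕)
    (hn : 2 * d ≤ #Q + n) :
    ∃ (G : Finset α) (e : ℕ), Disjoint G Q ∧ 2 * #G ≤ n + e ∧
      ∀ A ∈ 𝓕, Q ⊆ A → #A + e ≤ #Q + 2 * #(A ∩ G) := by
  obtain ⟨B, hB, hQB⟩ := h𝓕.exists_le_card_symmDiff Q
  obtain ⟨e, he⟩ := Nat.exists_eq_add_of_le hQB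
  have hcardB := h𝓕.card_le h₀ hB
  have hsymmQ := card_symmDiff_add_two_mul_card_inter Q B
  have hsplitB := card_sdiff_add_card_inter B Q
  rw [inter_comm B Q] at hsplitB
  refine ⟨B \ Q, e, sdiff_disjoint, by lia, fun A hA hQA => ?_⟩
  have hdist := h𝓕.card_symmDiff_le A hA B hB
  have hsymmA := card_symmDiff_add_two_mul_card_inter A B
  have hsplitA : #(A ∩ B) = #(A ∩ (B \ Q)) + #(Q ∩ B) := by
    rw [← inter_sdiff_assoc, ← card_sdiff_add_card_inter (A ∩ B) Q, inter_right_comm,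
      inter_eq_right.2 hQA]
  lia

lemma card_le_choose (h𝓕 : IsDiametral d 𝓕) (h₀ : ∅ ∈ 𝓕) (hn : 2 * d ≤ #Q + n)
    (hT : ∀ A ∈ T, A ∈ 𝓕 ∧ Q ⊆ A ∧ #A = #Q + t) : #T ≤ n.choose t := by
  induction t generalizing n Q T with
  | zero =>
    have hTQ : ∀ A ∈ T, Q = A := fun A hA =>
      eq_of_subset_of_card_le (hT A hA).2.1 (hT A hA).2.2.le
    rw [Nat.choose_zero_right]
    exact card_le_one.2 fun A hA B hB => (hTQ A hA).symm.trans (hTQ B hB)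
  | succ t ih =>
    rcases T.eq_empty_or_nonempty with rfl | ⟨A, hA⟩
    · simp
    have hQd : #Q + (t + 1) ≤ d := (hT A hA).2.2 ▸ h𝓕.card_le h₀ (hT A hA).1
    obtain ⟨n, rfl⟩ : ∃ m, n = m + 1 := Nat.exists_eq_succ_of_ne_zero (by lia)
    obtain ⟨G, e, hGQ, hG, hGT⟩ := h𝓕.exists_disjoint_forall_card_add_le h₀ hn
    have hdeg : ∀ i ∈ G, #{A ∈ T | i ∈ A} ≤ n.choose t := by
      intro i hi
      have hcard := card_insert_of_notMem (disjoint_left.1 hGQ hi)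
      refine ih (Q := insert i Q) (by lia) fun A hA => ?_
      obtain ⟨hAT, hiA⟩ := mem_filter.1 hA
      obtain ⟨hA𝓕, hQA, hAcard⟩ := hT A hAT
      exact ⟨hA𝓕, insert_subset hiA hQA, by lia⟩
    have hcount : #T * ((t + 2 + e) / 2) ≤ #G * n.choose t := by
      refine card_mul_le_card_mul (fun A i => i ∈ A) (fun A hA => ?_) hdeg
      obtain ⟨hA𝓕, hQA, hAcard⟩ := hT A hA
      have hAG := hGT A hA𝓕 hQA
      rw [bipartiteAbove, filter_mem_eq_inter, inter_comm]
      lia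
    refine le_choose_succ_succ_of_mul_le (e := e) (by lia) ?_
    calc #T * (t + 1 + e) ≤ #T * (2 * ((t + 2 + e) / 2)) := Nat.mul_le_mul_left _ (by lia)
      _ = 2 * (#T * ((t + 2 + e) / 2)) := by ring
      _ ≤ 2 * (#G * n.choose t) := Nat.mul_le_mul_left _ hcount
      _ = 2 * #G * n.choose t := by ring
      _ ≤ (n + 1 + e) * n.choose t := Nat.mul_le_mul_right _ hG

lemma card_le_sum_choose (h𝓕 : IsDiametral d 𝓕) (h₀ : ∅ ∈ 𝓕) (hn : 2 * d ≤ #Q + n)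
    (hT : ∀ A ∈ T, A ∈ 𝓕 ∧ Q ⊆ A ∧ #A ≤ #Q + m) : #T ≤ ∑ i ∈ range (m + 1), n.choose i := by
  have hmaps : Set.MapsTo (fun A => #A - #Q) (T : Set (Finset α)) (range (m + 1)) := by
    intro A hA
    have := (hT A (mem_coe.1 hA)).2.2
    simp only [coe_range, Set.mem_Iio]
    lia
  rw [card_eq_sum_card_fiberwise hmaps]
  refine sum_le_sum fun i _ => h𝓕.card_le_choose h₀ hn fun A hA => ?_
  obtain ⟨hAT, hAi⟩ := mem_filter.1 hA
  obtain ⟨hA𝓕, hQA, -⟩ := hT A hAT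
  have := card_le_card hQA
  exact ⟨hA𝓕, hQA, by lia⟩

lemma card_le_two_pow (h𝓕 : IsDiametral d 𝓕) (h₀ : ∅ ∈ 𝓕) (hn : 2 * d ≤ #Q + n)
    (hT : ∀ A ∈ T, A ∈ 𝓕 ∧ Q ⊆ A) : #T ≤ 2 ^ n := by
  rw [← Nat.sum_range_choose]
  refine h𝓕.card_le_sum_choose h₀ hn fun A hA => ⟨(hT A hA).1, (hT A hA).2, ?_⟩
  have := h𝓕.card_le h₀ (hT A hA).1
  lia

lemma card_mul_choose_le (h𝓕 : IsDiametral d 𝓕) (h₀ : ∅ ∈ 𝓕) (hn : 2 * d ≤ k + n)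
    (hT : ∀ A ∈ T, A ∈ 𝓕 ∧ m ≤ #(A ∩ G)) : #T * m.choose k ≤ (#G).choose k * 2 ^ n := by
  rw [← card_powersetCard k G]
  refine card_mul_le_card_mul (fun A Q => Q ⊆ A) (fun A hA => ?_) fun Q hQ => ?_
  · calc m.choose k ≤ (#(A ∩ G)).choose k := Nat.choose_le_choose k (hT A hA).2
      _ = #(powersetCard k (A ∩ G)) := (card_powersetCard k _).symm
      _ ≤ _ := card_le_card fun Q hQ => by
        rw [mem_powersetCard, subset_inter_iff] at hQ
        rw [mem_bipartiteAbove, mem_powersetCard]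
        exact ⟨⟨hQ.1.2, hQ.2⟩, hQ.1.1⟩
  · refine h𝓕.card_le_two_pow h₀ (Q := Q) (by rwa [(mem_powersetCard.1 hQ).2]) fun A hA => ?_
    rw [mem_bipartiteBelow] at hA
    exact ⟨(hT A hA.1).1, hA.2⟩

lemma card_mul_pow_le (h𝓕 : IsDiametral d 𝓕) (h₀ : ∅ ∈ 𝓕) (hn : 2 * d ≤ k + n)
    (hT : ∀ A ∈ T, A ∈ 𝓕 ∧ m ≤ #(A ∩ G)) : #T * (m + 1 - k) ^ k ≤ #G ^ k * 2 ^ n :=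
  calc #T * (m + 1 - k) ^ k ≤ #T * m.descFactorial k :=
        Nat.mul_le_mul_left _ (m.pow_sub_le_descFactorial k)
    _ = k.factorial * (#T * m.choose k) := by
        rw [Nat.descFactorial_eq_factorial_mul_choose, mul_left_comm]
    _ ≤ k.factorial * ((#G).choose k * 2 ^ n) :=
        Nat.mul_le_mul_left _ (h𝓕.card_mul_choose_le h₀ hn hT)
    _ = (#G).descFactorial k * 2 ^ n := by
        rw [Nat.descFactorial_eq_factorial_mul_choose, mul_assoc]
    _ ≤ #G ^ k * 2 ^ n := Nat.mul_le_mul_right _ ((#G).descFactorial_le_pow k)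

lemma card_le_of_le_card_inter (h𝓕 : IsDiametral d 𝓕) (h₀ : ∅ ∈ 𝓕) (hk : 20 * k ≤ #G)
    (hT : ∀ A ∈ T, A ∈ 𝓕 ∧ 3 * #G ≤ 5 * #(A ∩ G)) : (#T : ℝ) ≤ 4 ^ d * (10 / 11) ^ k := by
  rcases T.eq_empty_or_nonempty with rfl | ⟨A, hA⟩
  · simp only [card_empty, Nat.cast_zero]
    positivity
  obtain ⟨n, hn⟩ : ∃ n, 2 * d = k + n := Nat.exists_eq_add_of_le <| by
    have hAG := (hT A hA).2
    have hAd := h𝓕.card_le h₀ (hT A hA).1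
    have := card_le_card (inter_subset_left (s₁ := A) (s₂ := G))
    lia
  have hpos : 0 < #G ^ k := by
    rcases k.eq_zero_or_pos with rfl | hk₀
    · simp
    · exact pow_pos (by lia) k
  have hcount := h𝓕.card_mul_pow_le h₀ (G := G) (m := (3 * #G + 4) / 5) hn.le fun A hA =>
    ⟨(hT A hA).1, by have := (hT A hA).2; lia⟩
  have hnat : #T * 11 ^ k ≤ 20 ^ k * 2 ^ n := by
    refine Nat.le_of_mul_le_mul_right (c := #G ^ k) ?_ hpos
    -- the base `11 / 20` is `3 / 5 - 1 / 20`, as `k ≤ #G / 20`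
    calc #T * 11 ^ k * #G ^ k = #T * (11 * #G) ^ k := by rw [mul_pow, mul_assoc]
      _ ≤ #T * (20 * ((3 * #G + 4) / 5 + 1 - k)) ^ k := by
        refine Nat.mul_le_mul_left _ (Nat.pow_le_pow_left ?_ k)
        lia
      _ = 20 ^ k * (#T * ((3 * #G + 4) / 5 + 1 - k) ^ k) := by rw [mul_pow, mul_left_comm]
      _ ≤ 20 ^ k * (#G ^ k * 2 ^ n) := Nat.mul_le_mul_left _ hcount
      _ = 20 ^ k * 2 ^ n * #G ^ k := by ring
  have hpow : (20 : ℝ) ^ k * 2 ^ n = 4 ^ d * 10 ^ k := by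
    rw [show (20 : ℝ) = 10 * 2 by norm_num, show (4 : ℝ) = 2 ^ 2 by norm_num, ← pow_mul, hn,
      mul_pow, pow_add]
    ring
  rw [div_pow, ← mul_div_assoc, le_div_iff₀ (by positivity), ← hpow]
  exact_mod_cast hnat

lemma card_le_of_le_card_symmDiff_inter (h𝓕 : IsDiametral d 𝓕) (hC : C ∈ 𝓕) (hk : 20 * k ≤ #G)
    (hT : ∀ A ∈ T, A ∈ 𝓕 ∧ 3 * #G ≤ 5 * #(A ∆ C ∩ G)) : (#T : ℝ) ≤ 4 ^ d * (10 / 11) ^ k := by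
  rw [← card_image_of_injective T (symmDiff_left_injective C)]
  refine (h𝓕.translate C).card_le_of_le_card_inter ?_ hk (forall_mem_image.2 fun A hA => ?_)
  · simpa [← bot_eq_empty] using hC
  · exact ⟨by simpa [symmDiff_assoc] using (hT A hA).1, (hT A hA).2⟩

lemma card_le_card_image_inter_mul (h𝓕 : IsDiametral d 𝓕) (h₀ : ∅ ∈ 𝓕)
    (hT : ∀ A ∈ T, A ∈ 𝓕 ∧ #(A \ U) ≤ m) :
    #T ≤ #(T.image (· ∩ U)) * ∑ i ∈ range (m + 1), (2 * d).choose i := by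
  rw [mul_comm]
  refine card_le_mul_card_image T _ fun Q _ => ?_
  refine h𝓕.card_le_sum_choose h₀ (Q := Q) (m := m) (Nat.le_add_left _ _) fun A hA => ?_
  obtain ⟨hAT, rfl⟩ := mem_filter.1 hA
  have := card_sdiff_add_card_inter A U
  exact ⟨(hT A hAT).1, inter_subset_left, by have := (hT A hAT).2; lia⟩

lemma card_le_of_card_sdiff_le (h𝓕 : IsDiametral d 𝓕) (h₀ : ∅ ∈ 𝓕) (hU : 2 * #U ≤ 5 * d)
    (hT : ∀ A ∈ T, A ∈ 𝓕 ∧ 50 * #(A \ U) ≤ d) : (#T : ℝ) ≤ (395 / 100) ^ d := by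
  have htrace : (#(T.image (· ∩ U)) : ℝ) ≤ (7 / 4) ^ d * 2 ^ d := by
    refine (card_image_inter_le_of_card_symmDiff_le (s := 1 / 2) (by norm_num) (by norm_num) U
      fun A hA B hB => h𝓕.card_symmDiff_le A (hT A hA).1 B (hT B hB).1).trans ?_
    calc (1 + (1 / 2 : ℝ) ^ 2) ^ #U / (1 / 2) ^ d = (5 / 4) ^ #U * 2 ^ d := by
          rw [one_div_pow (2 : ℝ) d, div_div_eq_mul_div, div_one]
          norm_num
      _ ≤ (7 / 4) ^ d * 2 ^ d := by gcongr; exact five_fourths_pow_le hU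
  have hfiber : (∑ i ∈ range (d / 50 + 1), (2 * d).choose i : ℝ)
      ≤ (101 / 100) ^ (2 * d) * (11 / 10) ^ d := by
    refine (sum_range_choose_le_one_add_pow_div (t := 1 / 100) (by norm_num) (by norm_num)
      (2 * d) (d / 50)).trans ?_
    calc (1 + 1 / 100 : ℝ) ^ (2 * d) / (1 / 100) ^ (d / 50)
          = (101 / 100) ^ (2 * d) * 100 ^ (d / 50) := by
          rw [one_div_pow, div_div_eq_mul_div, div_one]
          norm_num
      _ ≤ (101 / 100) ^ (2 * d) * (11 / 10) ^ d := by
          gcongr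
          exact pow_div_le_pow (by norm_num) (by norm_num) (by norm_num) d
  have hmul := h𝓕.card_le_card_image_inter_mul h₀ (U := U) (m := d / 50) fun A hA =>
    ⟨(hT A hA).1, by have := (hT A hA).2; lia⟩
  calc (#T : ℝ)
      ≤ #(T.image (· ∩ U)) * ∑ i ∈ range (d / 50 + 1), ((2 * d).choose i : ℝ) := by
        exact_mod_cast hmul
    _ ≤ ((7 / 4) ^ d * 2 ^ d) * ((101 / 100) ^ (2 * d) * (11 / 10) ^ d) := by gcongr
    _ = (7 / 4 * 2 * ((101 / 100) ^ 2 * (11 / 10))) ^ d := by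
        rw [pow_mul, ← mul_pow, ← mul_pow, ← mul_pow]
    _ ≤ (395 / 100) ^ d := by gcongr; norm_num

lemma card_filter_le_of_lt_card_sdiff (h𝓕 : IsDiametral d 𝓕) (hT : ∀ A ∈ T, A ∈ 𝓕) (hC : C ∈ 𝓕)
    (hCU : d < 50 * #(C \ U)) :
    (#{A ∈ T | 3 * #(C \ U) ≤ 5 * #((C \ U) \ A)} : ℝ) ≤ 4 ^ d * (10 / 11) ^ (d / 1000) := by
  refine h𝓕.card_le_of_le_card_symmDiff_inter hC (G := C \ U) (by lia) fun A hA => ?_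
  obtain ⟨hAT, hA⟩ := mem_filter.1 hA
  have hG : A ∆ C ∩ (C \ U) = (C \ U) \ A := by
    ext i
    simp only [mem_inter, mem_symmDiff, mem_sdiff]
    tauto
  exact ⟨hT A hAT, hG ▸ hA⟩

lemma two_mul_card_le (h𝓕 : IsDiametral d 𝓕) (h₀ : ∅ ∈ 𝓕) (hA : A ∈ 𝓕)
    (hU : 2 * #U ≤ 5 * #(A ∩ U)) : 2 * #U ≤ 5 * d := by
  have hAd := h𝓕.card_le h₀ hA
  have := card_le_card (inter_subset_left (s₁ := A) (s₂ := U))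
  lia

/-- The rounds of the process: `r` bounds the number of remaining ones, because each of them
enlarges `U` by more than `d / 50` elements while `2 * #U ≤ 5 * d` persists. -/
lemma card_le_nat_mul_add (h𝓕 : IsDiametral d 𝓕) (h₀ : ∅ ∈ 𝓕) {r : ℕ}
    (hr : 125 * d < 50 * #U + r * d) (hT : ∀ A ∈ T, A ∈ 𝓕 ∧ 2 * #U ≤ 5 * #(A ∩ U)) :
    (#T : ℝ) ≤ r * (4 ^ d * (10 / 11) ^ (d / 1000)) + (395 / 100) ^ d := by
  induction r generalizing U T with
  | zero =>
    have hT₀ : T = ∅ := eq_empty_of_forall_notMem fun A hA => by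
      have := h𝓕.two_mul_card_le h₀ (hT A hA).1 (hT A hA).2
      lia
    rw [hT₀, card_empty, Nat.cast_zero]
    positivity
  | succ r ih =>
    by_cases hsmall : ∀ A ∈ T, 50 * #(A \ U) ≤ d
    · rcases T.eq_empty_or_nonempty with rfl | ⟨A, hA⟩
      · rw [card_empty, Nat.cast_zero]
        positivity
      have hU := h𝓕.two_mul_card_le h₀ (hT A hA).1 (hT A hA).2
      refine (h𝓕.card_le_of_card_sdiff_le h₀ hU fun A hA => ⟨(hT A hA).1, hsmall A hA⟩).trans ?_
      exact le_add_of_nonneg_left (by positivity)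
    push Not at hsmall
    obtain ⟨C, hCT, hC⟩ := hsmall
    have hr' : 125 * d < 50 * #(U ∪ C \ U) + r * d := by
      rw [card_union_of_disjoint disjoint_sdiff]
      lia
    have hbad := h𝓕.card_filter_le_of_lt_card_sdiff (fun A hA => (hT A hA).1) (hT C hCT).1 hC
    have hgood := ih (T := {A ∈ T | ¬ 3 * #(C \ U) ≤ 5 * #((C \ U) \ A)}) hr' fun A hA => by
      obtain ⟨hAT, hA⟩ := mem_filter.1 hA
      exact ⟨(hT A hAT).1, two_mul_card_union_le disjoint_sdiff (hT A hAT).2 (not_le.1 hA)⟩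
    rw [← card_filter_add_card_filter_not (s := T) fun A => 3 * #(C \ U) ≤ 5 * #((C \ U) \ A)]
    push_cast
    linarith

theorem card_le_mul_add (h𝓕 : IsDiametral d 𝓕) (h₀ : ∅ ∈ 𝓕) (hd : 1 ≤ d) (hT : ∀ A ∈ T, A ∈ 𝓕) :
    (#T : ℝ) ≤ 126 * (4 ^ d * (10 / 11) ^ (d / 1000)) + (395 / 100) ^ d := by
  refine h𝓕.card_le_nat_mul_add h₀ (U := ∅) (r := 126) ?_ fun A hA => ⟨hT A hA, by simp⟩
  rw [card_empty]
  lia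

end IsDiametral

section Words

lemma hDist_triangle (n : ℕ) (a b c : ℕ → Fin n) : hDist n a c ≤ hDist n a b + hDist n b c := by
  refine (Set.encard_le_encard fun i hi => ?_).trans (Set.encard_union_le _ _)
  by_contra h
  rw [Set.mem_union, not_or] at h
  exact hi ((not_not.1 h.1).trans (not_not.1 h.2))

lemma IsDMaximal.exists_lt_hDist_add {n d r : ℕ} {S : Set (ℕ → Fin n)} (hS : IsDMaximal n d S)
    (hball : ¬ ContainsBall n S r) (y : ℕ → Fin n) : ∃ s ∈ S, (d : ℕ∞) < hDist n y s + r := by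
  by_contra! h
  refine hball ⟨y, fun z hz => hS.2.2 z fun s hs => ?_⟩
  calc hDist n z s ≤ hDist n z y + hDist n y s := hDist_triangle n z y s
    _ ≤ r + hDist n y s := add_le_add_left hz _
    _ = hDist n y s + r := add_comm _ _
    _ ≤ d := h s hs

/-- The binary word obtained from `x` by changing the letters at the positions in `A`. It identifies
the finite sets of positions with the words at finite distance from `x`. -/
def flipWord (x : ℕ → Fin 2) (A : Finset ℕ) : ℕ → Fin 2 := fun i => if i ∈ A then x i + 1 else x i

variable {x y : ℕ → Fin 2}

lemma flipWord_empty (x : ℕ → Fin 2) : flipWord x ∅ = x :=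
  funext fun _ => if_neg (notMem_empty _)

lemma flipWord_apply_ne_iff (x : ℕ → Fin 2) (A B : Finset ℕ) (i : ℕ) :
    flipWord x A i ≠ flipWord x B i ↔ i ∈ A ∆ B := by
  have hne : ∀ p : Fin 2, p + 1 ≠ p := by decide
  rw [mem_symmDiff]
  by_cases hA : i ∈ A <;> by_cases hB : i ∈ B <;> simp [flipWord, hA, hB, hne, (hne _).symm]

lemma hDist_flipWord (x : ℕ → Fin 2) (A B : Finset ℕ) :
    hDist 2 (flipWord x A) (flipWord x B) = #(A ∆ B) := by
  rw [← Set.encard_coe_eq_coe_finsetCard]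
  exact congrArg Set.encard (Set.ext (flipWord_apply_ne_iff x A B))

lemma flipWord_injective (x : ℕ → Fin 2) : Function.Injective (flipWord x) := by
  intro A B h
  rw [← symmDiff_eq_bot, bot_eq_empty, ← card_eq_zero]
  have hdist := hDist_flipWord x A B
  rw [h] at hdist
  simpa [hDist] using hdist.symm

lemma exists_flipWord_eq {d : ℕ} (h : hDist 2 y x ≤ d) : ∃ A, flipWord x A = y := by
  have hfin : {i | y i ≠ x i}.Finite := Set.finite_of_encard_le_coe h
  have htwo : ∀ p q : Fin 2, q ≠ p → p + 1 = q := by decide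
  refine ⟨hfin.toFinset, funext fun i => ?_⟩
  by_cases hi : y i = x i
  · simp [flipWord, hi]
  · simp [flipWord, hi, htwo _ _ hi]

lemma isDiametral_preimage_flipWord {d : ℕ} {S : Set (ℕ → Fin 2)}
    (hS : ∀ a ∈ S, ∀ b ∈ S, hDist 2 a b ≤ d) (hfar : ∀ y, ∃ s ∈ S, (d : ℕ∞) ≤ hDist 2 y s)
    (hx : x ∈ S) : IsDiametral d (flipWord x ⁻¹' S) where
  card_symmDiff_le A hA B hB := by
    have h := hS _ hA _ hB
    rw [hDist_flipWord] at h
    exact_mod_cast h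
  exists_le_card_symmDiff X := by
    obtain ⟨s, hs, hXs⟩ := hfar (flipWord x X)
    obtain ⟨B, rfl⟩ := exists_flipWord_eq (hS s hs x hx)
    rw [hDist_flipWord] at hXs
    exact ⟨B, hs, by exact_mod_cast hXs⟩

end Words

theorem stmt2_general :
    ∃ d₀ : ℕ, ∀ d : ℕ, d₀ ≤ d → ∀ S : Set (ℕ → Fin 2),
      (∀ a ∈ S, ∀ b ∈ S, hDist 2 a b ≤ (d : ℕ∞)) → (∀ y, ∃ s ∈ S, (d : ℕ∞) ≤ hDist 2 y s) →
      S.Finite ∧ (S.ncard : ℝ) ≤ (4 - 1 / 10 ^ 10 : ℝ) ^ d := by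
  obtain ⟨d₀, hd₀⟩ := Filter.eventually_atTop.1
    (eventually_const_mul_add_le_pow.and (Filter.eventually_ge_atTop 1))
  refine ⟨d₀, fun d hd S hS hfar => ?_⟩
  obtain ⟨hbound, hd₁⟩ := hd₀ d hd
  obtain ⟨x, hx, -⟩ := hfar 0
  have h𝓕 := isDiametral_preimage_flipWord hS hfar hx
  have h₀ : ∅ ∈ flipWord x ⁻¹' S := by rwa [Set.mem_preimage, flipWord_empty]
  have himage : flipWord x '' (flipWord x ⁻¹' S) = S :=
    Set.image_preimage_eq_of_subset fun y hy => exists_flipWord_eq (hS y hy x hx)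
  obtain ⟨hfin, hcard⟩ := finite_and_ncard_le_of_forall_finset_card_le fun T hT =>
    (h𝓕.card_le_mul_add h₀ hd₁ hT).trans hbound
  rw [← himage, Set.ncard_image_of_injective _ (flipWord_injective x)]
  exact ⟨hfin.image _, hcard⟩

theorem stmt2 :
    ∃ d₀ : ℕ, ∀ d : ℕ, d₀ ≤ d → ∀ S : Set (ℕ → Fin 2),
      IsDMaximal 2 d S → ¬ ContainsBall 2 S 1 →
      S.Finite ∧ (S.ncard : ℝ) ≤ (4 - 1 / 10 ^ 10 : ℝ) ^ d := by
  obtain ⟨d₀, h⟩ := stmt2_general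
  exact ⟨d₀, fun d hd S hS hball => h d hd S hS.1 fun y =>
    (hS.exists_lt_hDist_add hball y).imp fun s hs => ⟨hs.1, Order.le_of_lt_add_one hs.2⟩⟩
end

section
/- Let n ≥ 2 and d ≥ 1 be integers. Every d-maximal set S ⊆ [n]^∞ has at least (1/2)·(d/log(2d))^{2/3} elements (in particular, if S is finite then |S| ≥ (1/2)·(d/log(2d))^{2/3}). -/
/-!
A word at distance `< d` from every element of a `d`-maximal set `S` forces `S` to be infinite, as
it may be altered at any one position. So let `S` be finite with `m` elements, and restrict to the
finitely many positions at which `S` is not constant. Choosing at each position the letter of a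
uniformly random element of `S` gives a word whose expected distance to each `s ∈ S` is at most
`(1 - 1 / m) d`, and the aim is to lose less than `d / m` in fixing the choices. By the
Shapley–Folkman lemma, applied to the `m`-dimensional vectors of contributions to the distances, the
mean is also attained by distributions of which all but `m` are deterministic. The remaining `m`
choices are made one at a time, never letting the exponential potential `∑ s, exp (r * error s)`
exceed its expectation. The resulting error is at most `√(m log m)`, so `d ≤ m √(m log m)`.
-/

open Finset Module

section ShapleyFolkman

variable {ι E : Type*} [AddCommGroup E] [Module ℝ E]

lemma exists_forall_add_smul_mem_and_eq_zero_iff {C : Set E} (hC : Convex ℝ C) {x : E}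
    (hx : x ∈ C) :
    ∃ v : E, (∀ t : ℝ, |t| ≤ 1 → x + t • v ∈ C) ∧ (v = 0 ↔ x ∈ C.extremePoints ℝ) := by
  by_cases hext : x ∈ C.extremePoints ℝ
  · exact ⟨0, by simpa using fun _ _ ↦ hx, by simpa using hext⟩
  obtain ⟨a, ha, b, hb, hxab, hne⟩ : ∃ a ∈ C, ∃ b ∈ C, x ∈ openSegment ℝ a b ∧ a ≠ x := by
    simpa [mem_extremePoints_iff_left, hx] using hext
  obtain ⟨p, q, hp, hq, hpq, rfl⟩ := hxab
  -- `x = p a + q b` moves inside `[a, b]` as long as neither weight becomes negative.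
  refine ⟨(p * q) • (a - b), fun t ht ↦ ?_, ?_⟩
  · obtain ⟨hlo, hhi⟩ := abs_le.1 ht
    have hp' : 0 ≤ p + t * (p * q) := by nlinarith [mul_pos hp hq]
    have hq' : 0 ≤ q - t * (p * q) := by nlinarith [mul_pos hp hq]
    convert hC ha hb hp' hq' (by linarith) using 1
    module
  · refine iff_of_false (fun h ↦ hne ?_) hext
    have hab : a = b := sub_eq_zero.1 ((smul_eq_zero.1 h).resolve_left (mul_pos hp hq).ne')
    rw [← hab, ← add_smul, hpq, one_smul]

variable [Fintype ι] [FiniteDimensional ℝ E]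

lemma ncard_notMem_extremePoints_le_finrank {C : ι → Set E} (hC : ∀ i, Convex ℝ (C i)) {z : ι → E}
    (hz : z ∈ ({x | (∀ i, x i ∈ C i) ∧ ∑ i, x i = ∑ i, z i} : Set (ι → E)).extremePoints ℝ) :
    {i | z i ∉ (C i).extremePoints ℝ}.ncard ≤ finrank ℝ E := by
  classical
  obtain ⟨⟨hzC, -⟩, hzext⟩ := mem_extremePoints_iff_left.1 hz
  choose v hv hv0 using fun i ↦ exists_forall_add_smul_mem_and_eq_zero_iff (hC i) (hzC i)
  have hind : LinearIndepOn ℝ v ({i | v i ≠ 0} : Finset ι) := by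
    refine linearIndepOn_finset_iff.2 fun g hg i hi ↦ ?_
    have hsum : ∑ i, g i • v i = 0 := by
      rw [← hg, sum_filter_of_ne fun i _ h ↦ right_ne_zero_of_smul h]
    have hmem : ∀ ε : ℝ, |ε| ≤ 1 → (z + fun i ↦ (ε * (‖g‖⁻¹ * g i)) • v i) ∈
        ({x | (∀ i, x i ∈ C i) ∧ ∑ i, x i = ∑ i, z i} : Set (ι → E)) := fun ε hε ↦ by
      refine ⟨fun i ↦ hv i _ ?_, ?_⟩
      · have hgi : |‖g‖⁻¹ * g i| ≤ 1 := by
          rw [abs_mul, abs_inv, abs_norm]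
          exact inv_mul_le_one_of_le₀ (norm_le_pi_norm g i) (norm_nonneg g)
        rw [abs_mul]
        exact mul_le_one₀ hε (abs_nonneg _) hgi
      · simp only [Pi.add_apply, sum_add_distrib, ← mul_assoc, mul_smul, ← smul_sum, hsum,
          smul_zero, add_zero]
    have hfix := hzext _ (hmem 1 (by simp)) _ (hmem (-1) (by simp))
      ⟨1 / 2, 1 / 2, by norm_num, by norm_num, by norm_num, by
        ext i
        simp only [Pi.add_apply, Pi.smul_apply]
        module⟩
    have hi0 : (‖g‖⁻¹ * g i) • v i = 0 := by simpa using congrFun hfix i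
    have hvi : v i ≠ 0 := (mem_filter.1 hi).2
    rcases mul_eq_zero.1 ((smul_eq_zero.1 hi0).resolve_right hvi) with hnorm | hgi
    · exact congrFun (norm_eq_zero.1 (inv_eq_zero.1 hnorm)) i
    · exact hgi
  have hcard := hind.linearIndependent.fintype_card_le_finrank
  simpa [← hv0, ← Set.ncard_coe_finset] using hcard

variable [TopologicalSpace E] [T2Space E] [IsTopologicalAddGroup E] [ContinuousSMul ℝ E]
  [LocallyConvexSpace ℝ E]

theorem exists_sum_eq_ncard_notMem_extremePoints_le {C : ι → Set E} (hC : ∀ i, Convex ℝ (C i))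
    (hcomp : ∀ i, IsCompact (C i)) {y : ι → E} (hy : ∀ i, y i ∈ C i) :
    ∃ z : ι → E, (∀ i, z i ∈ C i) ∧ ∑ i, z i = ∑ i, y i ∧
      {i | z i ∉ (C i).extremePoints ℝ}.ncard ≤ finrank ℝ E := by
  have hK : IsCompact {z : ι → E | (∀ i, z i ∈ C i) ∧ ∑ i, z i = ∑ i, y i} :=
    (isCompact_pi_infinite hcomp).inter_right
      (isClosed_eq (continuous_finsetSum _ fun i _ ↦ continuous_apply i) continuous_const)
  obtain ⟨z, hz⟩ := hK.extremePoints_nonempty ⟨y, hy, rfl⟩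
  have ⟨hzC, hsum⟩ := extremePoints_subset hz
  exact ⟨z, hzC, hsum, ncard_notMem_extremePoints_le_finrank hC (by rwa [hsum])⟩

theorem shapley_folkman {A : ι → Set E} (hA : ∀ i, (A i).Finite) {y : ι → E}
    (hy : ∀ i, y i ∈ convexHull ℝ (A i)) :
    ∃ z : ι → E, (∀ i, z i ∈ convexHull ℝ (A i)) ∧ ∑ i, z i = ∑ i, y i ∧
      {i | z i ∉ A i}.ncard ≤ finrank ℝ E := by
  obtain ⟨z, hz, hsum, hcard⟩ := exists_sum_eq_ncard_notMem_extremePoints_le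
    (fun i ↦ convex_convexHull ℝ (A i)) (fun i ↦ (hA i).isCompact_convexHull ℝ) hy
  exact ⟨z, hz, hsum, (Set.ncard_le_ncard fun i (hi : z i ∉ A i) h ↦
    hi (extremePoints_convexHull_subset h)).trans hcard⟩

end ShapleyFolkman

section Rounding

open Real

lemma exp_mul_le_one_sub_add_mul_exp {a : ℝ} (ha0 : 0 ≤ a) (ha1 : a ≤ 1) (r : ℝ) :
    exp (r * a) ≤ 1 - a + a * exp r := by
  have h := convexOn_exp.2 (Set.mem_univ 0) (Set.mem_univ r) (sub_nonneg.2 ha1) ha0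
    (sub_add_cancel 1 a)
  simpa [mul_comm r a] using h

-- The moment generating function at `r` of a centred Bernoulli variable of mean `q`.
lemma exp_neg_mul_mul_one_sub_add_mul_exp_le {q : ℝ} (hq0 : 0 ≤ q) (hq1 : q ≤ 1) (r : ℝ) :
    exp (-(r * q)) * (1 - q + q * exp r) ≤ exp (r ^ 2 / 4) := by
  have hcosh : 1 + cosh r = 2 * cosh (r / 2) ^ 2 := by
    rw [cosh_sq', ← mul_div_cancel₀ r two_ne_zero, cosh_two_mul, cosh_sq']
    ring_nf
  have hvar : q * (1 - q) ≤ 1 / 4 := by nlinarith [sq_nonneg (q - 1 / 2)]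
  calc exp (-(r * q)) * (1 - q + q * exp r)
      ≤ (1 - q + q * exp (-r)) * (1 - q + q * exp r) := by
        gcongr
        simpa using exp_mul_le_one_sub_add_mul_exp hq0 hq1 (-r)
    _ = 1 + q * (1 - q) * (2 * cosh r - 2) := by
        rw [cosh_eq]
        have hexp : exp (-r) * exp r = 1 := by rw [← exp_add, neg_add_cancel, exp_zero]
        linear_combination q ^ 2 * hexp
    _ ≤ 1 + 1 / 4 * (2 * cosh r - 2) := by
        gcongr
        linarith [one_le_cosh r]
    _ = cosh (r / 2) ^ 2 := by linarith
    _ ≤ exp ((r / 2) ^ 2 / 2) ^ 2 := by gcongr; exact cosh_le_exp_half_sq _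
    _ = exp (r ^ 2 / 4) := by rw [← exp_nat_mul]; ring_nf

variable {ι κ : Type*} [Fintype ι] [Fintype κ]

lemma exists_mem_sum_mul_exp_le {A : Set (κ → ℝ)} (hA : A ⊆ Set.Icc 0 1) {q : κ → ℝ}
    (hq : q ∈ convexHull ℝ A) {w : κ → ℝ} (hw : 0 ≤ w) (r : ℝ) :
    ∃ a ∈ A, ∑ k, w k * exp (r * (a k - q k)) ≤ exp (r ^ 2 / 4) * ∑ k, w k := by
  have hq01 : q ∈ Set.Icc 0 1 := convexHull_min hA (convex_Icc 0 1) hq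
  -- After replacing `exp (r * a k)` by its chord over `[0, 1]`, the sum is affine in `a`.
  let u : κ → ℝ := fun k ↦ w k * exp (-(r * q k))
  obtain ⟨a, haA, ha⟩ : ∃ a ∈ A, ∑ k, (u k * (exp r - 1)) * a k ≤ ∑ k, (u k * (exp r - 1)) * q k :=
    ((dotProductBilin ℝ ℝ fun k ↦ u k * (exp r - 1)).concaveOn
      convex_univ).exists_le_of_mem_convexHull (Set.subset_univ A) hq
  have ha01 := hA haA
  refine ⟨a, haA, ?_⟩
  calc ∑ k, w k * exp (r * (a k - q k))
      = ∑ k, u k * exp (r * a k) := by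
        refine sum_congr rfl fun k _ ↦ ?_
        rw [mul_assoc, ← exp_add]
        ring_nf
    _ ≤ ∑ k, u k * (1 - a k + a k * exp r) := by
        gcongr with k
        · exact mul_nonneg (hw k) (exp_pos _).le
        · exact exp_mul_le_one_sub_add_mul_exp (ha01.1 k) (ha01.2 k) r
    _ = ∑ k, u k + ∑ k, (u k * (exp r - 1)) * a k := by
        rw [← sum_add_distrib]
        exact sum_congr rfl fun k _ ↦ by ring
    _ ≤ ∑ k, u k + ∑ k, (u k * (exp r - 1)) * q k := by gcongr
    _ = ∑ k, w k * (exp (-(r * q k)) * (1 - q k + q k * exp r)) := by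
        rw [← sum_add_distrib]
        exact sum_congr rfl fun k _ ↦ by ring
    _ ≤ ∑ k, w k * exp (r ^ 2 / 4) := by
        gcongr with k
        · exact hw k
        · exact exp_neg_mul_mul_one_sub_add_mul_exp_le (hq01.1 k) (hq01.2 k) r
    _ = exp (r ^ 2 / 4) * ∑ k, w k := by rw [← sum_mul, mul_comm]

lemma exists_mem_sum_exp_le {A : ι → Set (κ → ℝ)} (hA : ∀ i, A i ⊆ Set.Icc 0 1) {z : ι → κ → ℝ}
    (hz : ∀ i, z i ∈ convexHull ℝ (A i)) (r : ℝ) (s : Finset ι) :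
    ∃ a : ι → κ → ℝ, (∀ i ∈ s, a i ∈ A i) ∧ (∀ i ∉ s, a i = z i) ∧
      ∑ k, exp (r * ((∑ i, a i) k - (∑ i, z i) k)) ≤ exp (#s * (r ^ 2 / 4)) * Fintype.card κ := by
  classical
  induction s using Finset.induction_on with
  | empty => exact ⟨z, by simp⟩
  | insert j s hj ih =>
    obtain ⟨a, haA, haz, ha⟩ := ih
    obtain ⟨b, hbA, hb⟩ := exists_mem_sum_mul_exp_le (hA j) (hz j)
      (w := fun k ↦ exp (r * ((∑ i, a i) k - (∑ i, z i) k))) (fun k ↦ (exp_pos _).le) r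
    refine ⟨Function.update a j b, fun i hi ↦ ?_, fun i hi ↦ ?_, ?_⟩
    · rcases eq_or_ne i j with rfl | hij
      · simpa using hbA
      · simpa [hij] using haA i (mem_of_mem_insert_of_ne hi hij)
    · rw [mem_insert, not_or] at hi
      rw [Function.update_of_ne hi.1, haz i hi.2]
    · have hupd : ∑ i, Function.update a j b i = ∑ i, a i + (b - z j) := by
        rw [sum_update_of_mem (mem_univ j), sum_eq_add_sum_sdiff_singleton_of_mem (mem_univ j) a,
          haz j hj]
        abel
      calc ∑ k, exp (r * ((∑ i, Function.update a j b i) k - (∑ i, z i) k))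
          = ∑ k, exp (r * ((∑ i, a i) k - (∑ i, z i) k)) * exp (r * (b k - z j k)) := by
            refine sum_congr rfl fun k _ ↦ ?_
            rw [hupd, Pi.add_apply, Pi.sub_apply, ← exp_add]
            ring_nf
        _ ≤ exp (r ^ 2 / 4) * ∑ k, exp (r * ((∑ i, a i) k - (∑ i, z i) k)) := hb
        _ ≤ exp (r ^ 2 / 4) * (exp (#s * (r ^ 2 / 4)) * Fintype.card κ) := by gcongr
        _ = exp (#(insert j s) * (r ^ 2 / 4)) * Fintype.card κ := by
            rw [card_insert_of_notMem hj, ← mul_assoc, ← exp_add]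
            push_cast
            ring_nf

-- The slope `2 t / m` minimizes the Chernoff bound `r ↦ exp (m * (r ^ 2 / 4) - r * t) * m`.
lemma lt_of_sum_exp_le {m t : ℝ} (hm : 0 < m) (ht : 0 < t) (hlt : m * log m < t ^ 2) {x : κ → ℝ}
    (hx : ∑ k, exp (2 * t / m * x k) ≤ exp (m * ((2 * t / m) ^ 2 / 4)) * m) (k : κ) : x k < t := by
  by_contra! hk
  have hexp : exp (2 * t / m * t) ≤ exp (m * ((2 * t / m) ^ 2 / 4) + log m) :=
    calc exp (2 * t / m * t)
        ≤ exp (2 * t / m * x k) := by gcongr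
      _ ≤ ∑ k, exp (2 * t / m * x k) :=
          single_le_sum (f := fun k ↦ exp (2 * t / m * x k)) (fun k _ ↦ (exp_pos _).le) (mem_univ k)
      _ ≤ exp (m * ((2 * t / m) ^ 2 / 4)) * m := hx
      _ = exp (m * ((2 * t / m) ^ 2 / 4) + log m) := by rw [exp_add, exp_log hm]
  have hle : t ^ 2 / m ≤ log m := by
    have heq : 2 * t / m * t - m * ((2 * t / m) ^ 2 / 4) = t ^ 2 / m := by field_simp; ring
    linarith [exp_le_exp.1 hexp]
  rw [div_le_iff₀ hm] at hle
  linarith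

theorem exists_mem_sum_lt_sum_add {A : ι → Set (κ → ℝ)} (hfin : ∀ i, (A i).Finite)
    (hA : ∀ i, A i ⊆ Set.Icc 0 1) {y : ι → κ → ℝ} (hy : ∀ i, y i ∈ convexHull ℝ (A i)) {t : ℝ}
    (ht : 0 < t) (hlt : Fintype.card κ * log (Fintype.card κ) < t ^ 2) :
    ∃ a : ι → κ → ℝ, (∀ i, a i ∈ A i) ∧ ∀ k, ∑ i, a i k < ∑ i, y i k + t := by
  classical
  obtain ⟨z, hz, hzy, hcard⟩ := shapley_folkman hfin hy
  set m : ℝ := (Fintype.card κ : ℝ)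
  obtain ⟨a, haA, haz, ha⟩ := exists_mem_sum_exp_le hA hz (2 * t / m) {i | z i ∉ A i}
  refine ⟨a, fun i ↦ ?_, fun k ↦ ?_⟩
  · by_cases hi : z i ∈ A i
    · rwa [haz i (by simpa using hi)]
    · exact haA i (by simpa using hi)
  have hm : 0 < m := Nat.cast_pos.2 (Fintype.card_pos_iff.2 ⟨k⟩)
  have hfrac : (#{i | z i ∉ A i} : ℝ) ≤ m := by
    simpa [m, ← Set.ncard_coe_finset] using hcard
  have hpot : ∑ k, exp (2 * t / m * ((∑ i, a i) k - (∑ i, y i) k)) ≤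
      exp (m * ((2 * t / m) ^ 2 / 4)) * m :=
    (hzy ▸ ha).trans (by gcongr)
  have hdev := lt_of_sum_exp_le hm ht hlt hpot k
  simp only [Finset.sum_apply] at hdev
  linarith

end Rounding

section HammingDist

open Real

variable {ι κ : Type*} [Fintype ι] [Fintype κ] {β : ι → Type*} [∀ i, DecidableEq (β i)]

lemma average_hammingDist_le [Nonempty κ] {w : κ → ∀ i, β i} {d : ℕ}
    (hw : ∀ j k, hammingDist (w j) (w k) ≤ d) (k : κ) :
    (Fintype.card κ : ℝ)⁻¹ * ∑ j, (hammingDist (w j) (w k) : ℝ) ≤ d - d / Fintype.card κ := by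
  classical
  have hsum : ∑ j, hammingDist (w j) (w k) ≤ (Fintype.card κ - 1) * d := by
    rw [← sum_erase (f := fun j ↦ hammingDist (w j) (w k)) univ (hammingDist_self (w k)),
      ← card_univ, ← card_erase_of_mem (mem_univ k), ← smul_eq_mul]
    exact sum_le_card_nsmul _ _ _ fun j _ ↦ hw j k
  have hcard : (Fintype.card κ : ℝ) ≠ 0 := Nat.cast_ne_zero.2 Fintype.card_ne_zero
  calc (Fintype.card κ : ℝ)⁻¹ * ∑ j, (hammingDist (w j) (w k) : ℝ)
      ≤ (Fintype.card κ : ℝ)⁻¹ * ((Fintype.card κ - 1) * d) := by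
        rw [← Nat.cast_pred Fintype.card_pos]
        gcongr
        exact_mod_cast hsum
    _ = d - d / Fintype.card κ := by field_simp

theorem exists_forall_hammingDist_lt [Nonempty κ] {w : κ → ∀ i, β i} {d : ℕ}
    (hw : ∀ j k, hammingDist (w j) (w k) ≤ d)
    (hlt : Fintype.card κ ^ 3 * log (Fintype.card κ) < (d : ℝ) ^ 2) :
    ∃ f : ι → κ, ∀ k, hammingDist (fun i ↦ w (f i) i) (w k) < d := by
  have hd : 0 < (d : ℝ) := by
    have hsq : 0 < (d : ℝ) ^ 2 := hlt.trans_le' (by positivity)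
    exact (Nat.cast_nonneg d).lt_of_ne' (sq_pos_iff.1 hsq)
  set m : ℝ := (Fintype.card κ : ℝ)
  have hm : 0 < m := Nat.cast_pos.2 Fintype.card_pos
  let v : ι → κ → κ → ℝ := fun i j k ↦ if w j i ≠ w k i then 1 else 0
  have hv : ∀ f : ι → κ, ∀ k, ∑ i, v i (f i) k = hammingDist (fun i ↦ w (f i) i) (w k) :=
    fun f k ↦ sum_boole _ _
  have hv01 : ∀ i, Set.range (v i) ⊆ Set.Icc 0 1 := by
    rintro i _ ⟨j, rfl⟩
    constructor <;> intro k <;> dsimp only [v] <;> split_ifs <;> simp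
  have hmean : ∀ i, ∑ j, m⁻¹ • v i j ∈ convexHull ℝ (Set.range (v i)) := fun i ↦
    (convex_convexHull ℝ _).sum_mem (fun _ _ ↦ (inv_pos.2 hm).le)
      (by rw [sum_const, card_univ, nsmul_eq_mul, mul_inv_cancel₀ hm.ne'])
      fun j _ ↦ subset_convexHull ℝ _ (Set.mem_range_self j)
  have hlt' : m * log m < (d / m) ^ 2 := by
    rw [div_pow, lt_div_iff₀ (by positivity)]
    linarith
  obtain ⟨a, ha, hak⟩ := exists_mem_sum_lt_sum_add (fun i ↦ Set.finite_range (v i)) hv01 hmean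
    (div_pos hd hm) hlt'
  choose f hf using ha
  refine ⟨f, fun k ↦ ?_⟩
  have havg : ∑ i, (∑ j, m⁻¹ • v i j) k ≤ d - d / m := by
    simp only [Finset.sum_apply, Pi.smul_apply, smul_eq_mul]
    rw [sum_comm]
    simpa only [← mul_sum, hv fun _ ↦ _] using average_hammingDist_le hw k
  have hdist : (hammingDist (fun i ↦ w (f i) i) (w k) : ℝ) < d :=
    calc (hammingDist (fun i ↦ w (f i) i) (w k) : ℝ)
        = ∑ i, a i k := by simp only [← hv, hf]
      _ < ∑ i, (∑ j, m⁻¹ • v i j) k + d / m := hak k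
      _ ≤ d := by linarith
  exact_mod_cast hdist

end HammingDist

section InfiniteWords

variable {ι : Type*} {α : ι → Type*}

/-- The extended Hamming distance between words indexed by an arbitrary type, with an alphabet
`α i` at each position `i`. It extends Mathlib's `hammingDist` to infinite words and specializes
definitionally to `hDist n` for `ι = ℕ` and `α i = Fin n`. -/
noncomputable def hammingEDist (a b : ∀ i, α i) : ℕ∞ := {i | a i ≠ b i}.encard

lemma hammingEDist_eq_hammingDist_restrict [∀ i, DecidableEq (α i)] {a b : ∀ i, α i} {T : Finset ι}
    (h : ∀ i ∉ T, a i = b i) : hammingEDist a b = hammingDist (T.restrict a) (T.restrict b) := by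
  have hset : {i | a i ≠ b i} = ({i ∈ T | a i ≠ b i} : Finset ι) := by
    ext i
    simpa using fun hi ↦ not_imp_comm.1 (h i) hi
  rw [hammingEDist, hset, Set.encard_coe_eq_coe_finsetCard, card_filter, ← sum_coe_sort T,
    ← card_filter]
  rfl

lemma hammingEDist_update_le [DecidableEq ι] (a b : ∀ i, α i) (i : ι) (x : α i) :
    hammingEDist (Function.update a i x) b ≤ hammingEDist a b + 1 := by
  refine (Set.encard_le_encard fun j hj ↦ ?_).trans (Set.encard_insert_le _ i)
  rcases eq_or_ne j i with rfl | hji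
  · exact Set.mem_insert _ _
  · exact Set.mem_insert_of_mem _ (by simpa [hji] using hj)

lemma exists_finset_forall_notMem_eq {S : Set (∀ i, α i)} (hS : S.Finite)
    (hdist : ∀ a ∈ S, ∀ b ∈ S, hammingEDist a b < ⊤) :
    ∃ T : Finset ι, ∀ i ∉ T, ∀ a ∈ S, ∀ b ∈ S, a i = b i := by
  have hfin : (⋃ a ∈ S, ⋃ b ∈ S, {i | a i ≠ b i}).Finite :=
    hS.biUnion fun a ha ↦ hS.biUnion fun b hb ↦ Set.encard_lt_top_iff.1 (hdist a ha b hb)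
  refine ⟨hfin.toFinset, fun i hi a ha b hb ↦ by_contra fun hne ↦ hi ?_⟩
  simp only [Set.Finite.mem_toFinset, Set.mem_iUnion]
  exact ⟨a, ha, b, hb, hne⟩

theorem exists_forall_hammingEDist_lt {S : Set (∀ i, α i)} (hS : S.Finite) (hne : S.Nonempty)
    {d : ℕ} (hdist : ∀ a ∈ S, ∀ b ∈ S, hammingEDist a b ≤ d)
    (hlt : S.ncard ^ 3 * Real.log S.ncard < (d : ℝ) ^ 2) :
    ∃ x : ∀ i, α i, ∀ s ∈ S, hammingEDist x s < d := by
  classical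
  have : Fintype S := hS.fintype
  have : Nonempty S := hne.to_subtype
  obtain ⟨T, hT⟩ := exists_finset_forall_notMem_eq hS fun a ha b hb ↦
    (hdist a ha b hb).trans_lt (ENat.natCast_lt_top d)
  obtain ⟨f, hf⟩ := exists_forall_hammingDist_lt (w := fun s : S ↦ T.restrict s.1)
    (fun s t ↦ by
      have h := hdist s s.2 t t.2
      rwa [hammingEDist_eq_hammingDist_restrict fun i hi ↦ hT i hi s s.2 t t.2, Nat.cast_le] at h)
    (by rwa [← Nat.card_eq_fintype_card, Nat.card_coe_set_eq])
  obtain ⟨s₀, hs₀⟩ := hne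
  let x : ∀ i, α i := fun i ↦ if h : i ∈ T then (f ⟨i, h⟩).1 i else s₀ i
  refine ⟨x, fun s hs ↦ ?_⟩
  have hxT : T.restrict x = fun i ↦ T.restrict (f i).1 i := by
    ext i
    simp [x]
  have hxs : ∀ i ∉ T, x i = s i := fun i hi ↦ by
    simpa [x, hi] using hT i hi s₀ hs₀ s hs
  rw [hammingEDist_eq_hammingDist_restrict hxs, hxT, Nat.cast_lt]
  exact hf ⟨s, hs⟩

lemma infinite_of_forall_hammingEDist_lt [Infinite ι] [∀ i, Nontrivial (α i)]
    {S : Set (∀ i, α i)} {d : ℕ∞} (hS : ∀ x, (∀ s ∈ S, hammingEDist x s ≤ d) → x ∈ S)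
    {x : ∀ i, α i} (hx : ∀ s ∈ S, hammingEDist x s < d) : S.Infinite := by
  classical
  choose y hy using fun i ↦ exists_ne (x i)
  have hinj : Function.Injective fun i ↦ Function.update x i (y i) := fun i j hij ↦ by
    by_contra hne
    have h := congrFun hij i
    simp [hne, hy] at h
  exact Set.infinite_of_injective_forall_mem hinj fun i ↦ hS _ fun s hs ↦
    (hammingEDist_update_le x s i (y i)).trans (Order.add_one_le_of_lt (hx s hs))

theorem sq_le_ncard_pow_three_mul_log [Infinite ι] [∀ i, Nontrivial (α i)]
    {S : Set (∀ i, α i)} (hfin : S.Finite) (hne : S.Nonempty) {d : ℕ}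
    (hdist : ∀ a ∈ S, ∀ b ∈ S, hammingEDist a b ≤ d)
    (hS : ∀ x, (∀ s ∈ S, hammingEDist x s ≤ d) → x ∈ S) :
    (d : ℝ) ^ 2 ≤ S.ncard ^ 3 * Real.log S.ncard := by
  by_contra! hlt
  obtain ⟨x, hx⟩ := exists_forall_hammingEDist_lt hfin hne hdist hlt
  exact infinite_of_forall_hammingEDist_lt hS hx hfin

end InfiniteWords

open Real in
lemma half_mul_rpow_le_of_sq_le_pow_three_mul_log {d m : ℝ} (hd : 1 ≤ d) (hm : 0 < m)
    (h : d ^ 2 ≤ m ^ 3 * log m) : 1 / 2 * (d / log (2 * d)) ^ (2 / 3 : ℝ) ≤ m := by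
  set L := log (2 * d)
  have hL : 1 / 2 < L := calc
    1 / 2 < log 2 := by linarith [log_two_gt_d9]
    _ ≤ L := log_le_log two_pos (by linarith)
  have hq : 0 ≤ d / L := by positivity
  suffices hcube : (d / L) ^ 2 ≤ (2 * m) ^ 3 by
    have hpow : (d / L) ^ (2 / 3 : ℝ) ≤ 2 * m := by
      refine le_of_pow_le_pow_left₀ three_ne_zero (by positivity) ?_
      rwa [← rpow_mul_natCast hq, Nat.cast_ofNat, div_mul_cancel₀ _ three_ne_zero, rpow_two]
    linarith
  rw [div_pow, div_le_iff₀ (by positivity)]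
  have hL' : 1 / 8 ≤ L ^ 2 := by nlinarith
  rcases le_total m (2 * d) with hmd | hmd
  · calc d ^ 2 ≤ m ^ 3 * log m := h
      _ ≤ m ^ 3 * L := by gcongr; exact log_le_log hm hmd
      _ ≤ m ^ 3 * (8 * L ^ 2) := by gcongr; nlinarith
      _ = (2 * m) ^ 3 * L ^ 2 := by ring
  · calc d ^ 2 ≤ m ^ 2 := by gcongr; linarith
      _ ≤ m ^ 3 := pow_le_pow_right₀ (by linarith) (by norm_num)
      _ ≤ m ^ 3 * (8 * L ^ 2) := le_mul_of_one_le_right (by positivity) (by linarith)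
      _ = (2 * m) ^ 3 * L ^ 2 := by ring

theorem stmt5_general {ι : Type*} [Infinite ι] {α : ι → Type*} [∀ i, Nontrivial (α i)] {d : ℕ}
    (hd : 1 ≤ d) {S : Set (∀ i, α i)} (hne : S.Nonempty)
    (hdist : ∀ a ∈ S, ∀ b ∈ S, hammingEDist a b ≤ d)
    (hS : ∀ x, (∀ s ∈ S, hammingEDist x s ≤ d) → x ∈ S) :
    S.Infinite ∨ (1 / 2 : ℝ) * ((d : ℝ) / Real.log (2 * (d : ℝ))) ^ ((2 : ℝ) / 3) ≤ S.ncard := by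
  refine S.finite_or_infinite.symm.imp_right fun hfin ↦ ?_
  exact half_mul_rpow_le_of_sq_le_pow_three_mul_log (Nat.one_le_cast.2 hd)
    (Nat.cast_pos.2 ((Set.ncard_pos hfin).2 hne)) (sq_le_ncard_pow_three_mul_log hfin hne hdist hS)

theorem stmt5 (n d : ℕ) (hn : 2 ≤ n) (hd : 1 ≤ d) (S : Set (ℕ → Fin n))
    (hmax : IsDMaximal n d S) :
    S.Infinite ∨
      (1 / 2 : ℝ) * ((d : ℝ) / Real.log (2 * (d : ℝ))) ^ ((2 : ℝ) / 3) ≤ (S.ncard : ℝ) := by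
  obtain ⟨hdist, ⟨a, ha, -⟩, hS⟩ := hmax
  have := Fin.nontrivial_iff_two_le.2 hn
  exact stmt5_general hd ⟨a, ha⟩ hdist hS
end

section
/- Let n ≥ 2, d ≥ 1, L ≥ 0 be integers and let S ⊆ [n]^∞ be a d-maximal set that contains no (L+1)-ball. Then for every y ∈ [n]^∞ there exists r ∈ S such that dist(r,y) ≥ d − L. -/
theorem encard_setOf_ne_comm {ι : Type*} {α : ι → Type*} (a b : ∀ i, α i) :
    {i | a i ≠ b i}.encard = {i | b i ≠ a i}.encard := by
  simp only [ne_comm]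

theorem encard_setOf_ne_triangle {ι : Type*} {α : ι → Type*} (a b c : ∀ i, α i) :
    {i | a i ≠ c i}.encard ≤ {i | a i ≠ b i}.encard + {i | b i ≠ c i}.encard := by
  have hsub : {i | a i ≠ c i} ⊆ {i | a i ≠ b i} ∪ {i | b i ≠ c i} :=
    fun i hac => (Ne.ne_or_ne (b i) hac).imp_right Ne.symm
  exact (Set.encard_le_encard hsub).trans (Set.encard_union_le _ _)

theorem exists_lt_add_of_not_closedBall_subset {X M : Type*}
    [Add M] [LinearOrder M] [AddRightMono M] {δ : X → X → M}
    (triangle : ∀ x y z, δ x z ≤ δ x y + δ y z) {S : Set X} {d r : M}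
    (hS : ∀ x, (∀ s ∈ S, δ x s ≤ d) → x ∈ S) {y : X} (hball : ¬ {x | δ x y ≤ r} ⊆ S) :
    ∃ s ∈ S, d < r + δ y s := by
  obtain ⟨x, hxy, hxS⟩ := Set.not_subset.mp hball
  obtain ⟨s, hs, hds⟩ : ∃ s ∈ S, d < δ x s := by
    simpa only [not_forall, not_le, exists_prop] using mt (hS x) hxS
  refine ⟨s, hs, ?_⟩
  calc
    d < δ x s := hds
    _ ≤ δ x y + δ y s := triangle x y s
    _ ≤ r + δ y s := by gcongr; exact hxy

theorem stmt7_general {X : Type*} {δ : X → X → ℕ∞}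
    (triangle : ∀ x y z, δ x z ≤ δ x y + δ y z) {S : Set X} {d L : ℕ}
    (hS : ∀ x, (∀ s ∈ S, δ x s ≤ d) → x ∈ S) {y : X}
    (hball : ¬ {x | δ x y ≤ ((L + 1 : ℕ) : ℕ∞)} ⊆ S) :
    ∃ r ∈ S, ((d - L : ℕ) : ℕ∞) ≤ δ y r := by
  obtain ⟨r, hr, hlt⟩ := exists_lt_add_of_not_closedBall_subset triangle hS hball
  have hlt_succ : (d : ℕ∞) < L + δ y r + 1 := by
    rwa [Nat.cast_add_one, add_right_comm] at hlt
  refine ⟨r, hr, ?_⟩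
  rw [ENat.natCast_sub, tsub_le_iff_left]
  exact Order.le_of_lt_add_one hlt_succ

theorem stmt7 (n d L : ℕ) (hn : 2 ≤ n) (hd : 1 ≤ d)
    (S : Set (ℕ → Fin n)) (hmax : IsDMaximal n d S)
    (hball : ¬ ContainsBall n S (L + 1)) :
    ∀ y : ℕ → Fin n, ∃ r ∈ S, ((d - L : ℕ) : ℕ∞) ≤ hDist n r y := by
  intro y
  obtain ⟨r, hr, hyr⟩ :=
    stmt7_general (δ := hDist n) encard_setOf_ne_triangle hmax.2.2 fun h => hball ⟨y, h⟩
  exact ⟨r, hr, hyr.trans_eq (encard_setOf_ne_comm y r)⟩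
end
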